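/- arXiv:1311.1193 — 14 statements merged into one kernel-verified Lean document; each statement's English description precedes it below -/
import Mathlib

section
/- Let p be a natural number with p > 1. The map Φ sending an element (z_n)_{n∈ℕ} of the p-solenoid 𝕊_p to the character q/p^k ↦ z_k^q of ℤ[1/p] is well defined (its value is independent of the chosen representation q/p^k of an element of ℤ[1/p]) and is an isomorphism of topological groups from 𝕊_p onto the Pontryagin dual of the discrete group ℤ[1/p], i.e. the group of continuous homomorphisms ℤ[1/p] → 𝕋 with the compact-open topology. -/
open scoped Real

/-- The additive subgroup `ℤ[1/p]` of `ℚ` of `p`-adic rationals. -/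
def pAdicRat (p : ℕ) : AddSubgroup ℚ where
  carrier := {r : ℚ | ∃ (z : ℤ) (k : ℕ), r * (p : ℚ) ^ k = z}
  zero_mem' := ⟨0, 0, by simp⟩
  add_mem' := by
    rintro a b ⟨z1, k1, h1⟩ ⟨z2, k2, h2⟩
    refine ⟨z1 * (p : ℤ) ^ k2 + z2 * (p : ℤ) ^ k1, k1 + k2, ?_⟩
    push_cast
    calc (a + b) * (p : ℚ) ^ (k1 + k2)
        = (a * (p : ℚ) ^ k1) * (p : ℚ) ^ k2 + (b * (p : ℚ) ^ k2) * (p : ℚ) ^ k1 := by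
          rw [pow_add]; ring
      _ = (z1 : ℚ) * (p : ℚ) ^ k2 + (z2 : ℚ) * (p : ℚ) ^ k1 := by rw [h1, h2]
  neg_mem' := by
    rintro a ⟨z, k, h⟩
    exact ⟨-z, k, by push_cast; rw [neg_mul, h]⟩

lemma pAdicElem_mem (p : ℕ) (q : ℤ) (k : ℕ) : ((q : ℚ) / (p : ℚ) ^ k) ∈ pAdicRat p := by
  rcases Nat.eq_zero_or_pos p with h | h
  · exact ⟨0, 1, by simp [h]⟩
  · refine ⟨q, k, ?_⟩
    have : ((p : ℚ)) ^ k ≠ 0 := by positivity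
    field_simp

/-- The element `q / p^k` of `ℤ[1/p]`. -/
def pAdicElem (p : ℕ) (q : ℤ) (k : ℕ) : pAdicRat p :=
  ⟨(q : ℚ) / (p : ℚ) ^ k, pAdicElem_mem p q k⟩

/-- The set `Ξ_p` of sequences `α` with `α n ∈ [0,1)` and `p α_{n+1} ≡ α_n mod 1`,
with `p α_{n+1} - α_n ∈ {0, …, p-1}`. -/
def XiSeq (p : ℕ) (α : ℕ → ℝ) : Prop :=
  (∀ n, α n ∈ Set.Ico (0 : ℝ) 1) ∧ ∀ n, ∃ j : ℕ, j < p ∧ (p : ℝ) * α (n + 1) - α n = j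

/-- A `𝕋`-valued multiplier (normalized 2-cocycle) on a discrete abelian group. -/
def IsMultiplier {G : Type*} [AddCommGroup G] (σ : G → G → Circle) : Prop :=
  (∀ g h k : G, σ g h * σ (g + h) k = σ g (h + k) * σ h k) ∧
    ∀ g : G, σ g 0 = 1 ∧ σ 0 g = 1

/-- Two multipliers are cohomologous when they differ by a coboundary. -/
def AreCohomologous {G : Type*} [AddCommGroup G] (σ σ' : G → G → Circle) : Prop :=
  ∃ f : G → Circle, ∀ g h : G, σ g h = f g * f h * (f (g + h))⁻¹ * σ' g h

/-- The defining formula for the multiplier `Ψ_α` on `ℤ[1/p] × ℤ[1/p]`. -/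
def PsiFormula (p : ℕ) (α : ℕ → ℝ)
    (Ψ : (pAdicRat p × pAdicRat p) → (pAdicRat p × pAdicRat p) → Circle) : Prop :=
  ∀ (q1 q2 q3 q4 : ℤ) (k1 k2 k3 k4 : ℕ),
    Ψ (pAdicElem p q1 k1, pAdicElem p q2 k2) (pAdicElem p q3 k3, pAdicElem p q4 k4)
      = Circle.exp (2 * π * (α (k1 + k4) * q1 * q4))

/-- The group `ℤ[1/p]` regarded as a *discrete* topological group. -/
def PadicRatDiscrete (p : ℕ) : Type := pAdicRat p

instance (p : ℕ) : AddCommGroup (PadicRatDiscrete p) :=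
  inferInstanceAs (AddCommGroup (pAdicRat p))

instance (p : ℕ) : TopologicalSpace (PadicRatDiscrete p) := ⊥

instance (p : ℕ) : DiscreteTopology (PadicRatDiscrete p) := ⟨rfl⟩

/-- The element `q / p^k` of the discrete group `ℤ[1/p]`. -/
def pAdicElemD (p : ℕ) (q : ℤ) (k : ℕ) : PadicRatDiscrete p := pAdicElem p q k

/-- The `p`-solenoid `𝕊_p`, as a subgroup of `𝕋^ℕ`: sequences `(z_n)` of elements of the
circle group with `z_{n+1}^p = z_n` for all `n`; it carries the topology induced from the
product topology. -/
noncomputable def solenoid (p : ℕ) : Subgroup (ℕ → Circle) where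
  carrier := {z : ℕ → Circle | ∀ n : ℕ, (z (n + 1)) ^ p = z n}
  one_mem' := fun n => one_pow p
  mul_mem' := by
    intro a b ha hb n
    simp only [Pi.mul_apply, mul_pow, ha n, hb n]
  inv_mem' := by
    intro a ha n
    simp only [Pi.inv_apply, inv_pow, ha n]

lemma sol_shift (p : ℕ) (z : solenoid p) (k m : ℕ) :
    ((z : ℕ → Circle) (k + m)) ^ (p ^ m) = (z : ℕ → Circle) k := by
  induction m with
  | zero => simp
  | succ m ih =>
    have h := z.2 (k + m)
    rw [pow_succ', pow_mul, ← add_assoc]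
    rw [show ((z : ℕ → Circle) (k + m + 1)) ^ p = (z : ℕ → Circle) (k + m) from h]
    exact ih

lemma sol_zpow (p : ℕ) (z : solenoid p) (k m : ℕ) (q : ℤ) :
    ((z : ℕ → Circle) k) ^ q = ((z : ℕ → Circle) (k + m)) ^ ((p : ℤ) ^ m * q) := by
  rw [zpow_mul, ← sol_shift p z k m]
  norm_cast

lemma elemD_eq (p : ℕ) (hp : 1 < p) {q q' : ℤ} {k k' : ℕ}
    (h : pAdicElemD p q k = pAdicElemD p q' k') : (p : ℤ) ^ k' * q = (p : ℤ) ^ k * q' := by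
  have h2 : (q : ℚ) / (p : ℚ) ^ k = (q' : ℚ) / (p : ℚ) ^ k' := congrArg Subtype.val h
  have hp0 : (p : ℚ) ≠ 0 := by
    have : p ≠ 0 := by omega
    exact_mod_cast this
  rw [div_eq_div_iff (pow_ne_zero _ hp0) (pow_ne_zero _ hp0)] at h2
  have h3 : (p : ℚ) ^ k' * q = (p : ℚ) ^ k * q' := by linarith
  exact_mod_cast h3

lemma sol_wd (p : ℕ) (hp : 1 < p) (z : solenoid p) {q q' : ℤ} {k k' : ℕ}
    (h : pAdicElemD p q k = pAdicElemD p q' k') :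
    ((z : ℕ → Circle) k) ^ q = ((z : ℕ → Circle) k') ^ q' := by
  rw [sol_zpow p z k k' q, sol_zpow p z k' k q', elemD_eq p hp h, add_comm]

lemma exists_rep (p : ℕ) (hp : 1 < p) (x : PadicRatDiscrete p) :
    ∃ qk : ℤ × ℕ, x = pAdicElemD p qk.1 qk.2 := by
  obtain ⟨r, q, k, h⟩ := x
  refine ⟨(q, k), Subtype.ext ?_⟩
  have hp0 : (p : ℚ) ≠ 0 := by
    have : p ≠ 0 := by omega
    exact_mod_cast this
  exact (eq_div_iff (pow_ne_zero _ hp0)).2 h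

lemma elemD_add (p : ℕ) (hp : 1 < p) (q q' : ℤ) (k k' : ℕ) :
    pAdicElemD p q k + pAdicElemD p q' k'
      = pAdicElemD p ((p : ℤ) ^ k' * q + (p : ℤ) ^ k * q') (k + k') := by
  have hp0 : (p : ℚ) ≠ 0 := by
    have : p ≠ 0 := by omega
    exact_mod_cast this
  refine Subtype.ext ?_
  change (q : ℚ) / (p : ℚ) ^ k + (q' : ℚ) / (p : ℚ) ^ k' =
    (((p : ℤ) ^ k' * q + (p : ℤ) ^ k * q' : ℤ) : ℚ) / (p : ℚ) ^ (k + k')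
  rw [pow_add]
  push_cast
  field_simp

/-- value of the character attached to `z` -/
noncomputable def solVal (p : ℕ) (hp : 1 < p) (z : solenoid p) (x : PadicRatDiscrete p) :
    Circle :=
  ((z : ℕ → Circle) (exists_rep p hp x).choose.2) ^ (exists_rep p hp x).choose.1

lemma solVal_elem (p : ℕ) (hp : 1 < p) (z : solenoid p) (q : ℤ) (k : ℕ) :
    solVal p hp z (pAdicElemD p q k) = ((z : ℕ → Circle) k) ^ q :=
  sol_wd p hp z (exists_rep p hp (pAdicElemD p q k)).choose_spec.symm

lemma solVal_add (p : ℕ) (hp : 1 < p) (z : solenoid p) (x y : PadicRatDiscrete p) :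
    solVal p hp z (x + y) = solVal p hp z x * solVal p hp z y := by
  obtain ⟨⟨q, k⟩, rfl⟩ := exists_rep p hp x
  obtain ⟨⟨q', k'⟩, rfl⟩ := exists_rep p hp y
  rw [elemD_add p hp, solVal_elem, solVal_elem, solVal_elem, zpow_add,
    sol_zpow p z k k' q, sol_zpow p z k' k q', add_comm k' k]

/-- the character attached to `z` -/
noncomputable def solChar (p : ℕ) (hp : 1 < p) (z : solenoid p) :
    Multiplicative (PadicRatDiscrete p) →ₜ* Circle where
  toMonoidHom := MonoidHom.mk' (fun x => solVal p hp z x.toAdd) (fun x y => solVal_add p hp z _ _)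
  continuous_toFun := continuous_of_discreteTopology

lemma nsmul_elemD (p : ℕ) (hp : 1 < p) (n : ℕ) :
    p • pAdicElemD p 1 (n + 1) = pAdicElemD p 1 n := by
  have hp0 : (p : ℚ) ≠ 0 := by
    have : p ≠ 0 := by omega
    exact_mod_cast this
  refine Subtype.ext ?_
  change p • (((1 : ℤ) : ℚ) / (p : ℚ) ^ (n + 1)) = ((1 : ℤ) : ℚ) / (p : ℚ) ^ n
  rw [nsmul_eq_mul, pow_succ]
  field_simp

lemma zsmul_elemD (p : ℕ) (q : ℤ) (n : ℕ) :
    q • pAdicElemD p 1 n = pAdicElemD p q n := by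
  refine Subtype.ext ?_
  change q • (((1 : ℤ) : ℚ) / (p : ℚ) ^ n) = (q : ℚ) / (p : ℚ) ^ n
  rw [zsmul_eq_mul]
  push_cast
  ring

/-- the inverse map -/
noncomputable def solInv (p : ℕ) (hp : 1 < p)
    (χ : Multiplicative (PadicRatDiscrete p) →ₜ* Circle) : solenoid p :=
  ⟨fun n => χ (Multiplicative.ofAdd (pAdicElemD p 1 n)), fun n => by
    rw [← map_pow, ← ofAdd_nsmul, nsmul_elemD p hp]⟩

/-- the equivalence -/
noncomputable def solEquiv (p : ℕ) (hp : 1 < p) :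
    solenoid p ≃ (Multiplicative (PadicRatDiscrete p) →ₜ* Circle) where
  toFun := solChar p hp
  invFun := solInv p hp
  left_inv z := by
    refine Subtype.ext (funext fun n => ?_)
    exact (solVal_elem p hp z 1 n).trans (zpow_one _)
  right_inv χ := by
    refine ContinuousMonoidHom.ext fun x => ?_
    obtain ⟨⟨q, k⟩, h⟩ := exists_rep p hp x.toAdd
    obtain rfl : x = Multiplicative.ofAdd (pAdicElemD p q k) := h
    refine (solVal_elem p hp _ q k).trans ?_
    change (χ (Multiplicative.ofAdd (pAdicElemD p 1 k))) ^ q = _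
    rw [← map_zpow, ← ofAdd_zsmul, zsmul_elemD]

lemma solEquiv_symm_continuous (p : ℕ) (hp : 1 < p) : Continuous (solEquiv p hp).symm :=
  Continuous.subtype_mk (continuous_pi fun n => continuous_eval_const
    (F := Multiplicative (PadicRatDiscrete p) →ₜ* Circle)
    (Multiplicative.ofAdd (pAdicElemD p 1 n))) _

lemma solEquiv_continuous (p : ℕ) (hp : 1 < p) : Continuous (solEquiv p hp) := by
  refine ContinuousMonoidHom.isClosedEmbedding_coe.isInducing.continuous_iff.2 ?_
  refine continuous_pi fun x => ?_
  exact ((continuous_apply _).comp continuous_subtype_val).zpow _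

/-- For `p > 1`, the map `Φ` sending `(z_n)_{n∈ℕ} ∈ 𝕊_p` to the character
`q/p^k ↦ z_k^q` of `ℤ[1/p]` is well defined (independent of the representation `q/p^k`)
and is an isomorphism of topological groups from `𝕊_p` onto the Pontryagin dual of the
discrete group `ℤ[1/p]`, i.e. the group of continuous homomorphisms `ℤ[1/p] → 𝕋` with the
compact-open topology. -/
theorem solenoid_equiv_pontryaginDual (p : ℕ) (hp : 1 < p) :
    ∃ Φ : solenoid p ≃ PontryaginDual (Multiplicative (PadicRatDiscrete p)),
      (∀ (z : solenoid p) (q : ℤ) (k : ℕ),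
          Φ z (Multiplicative.ofAdd (pAdicElemD p q k)) = ((z : ℕ → Circle) k) ^ q) ∧
      (∀ a b : solenoid p, Φ (a * b) = Φ a * Φ b) ∧
      Continuous Φ ∧ Continuous Φ.symm := by
  exact ⟨solEquiv p hp, fun z q k => solVal_elem p hp z q k, fun a b =>
    ContinuousMonoidHom.ext fun x => mul_zpow _ _ _,
    solEquiv_continuous p hp, solEquiv_symm_continuous p hp⟩
end

section
/- Let p be a natural number with p > 1 and let α ∈ Ξ_p. Then Ψ_α is well defined (its value does not depend on the chosen representations q_i/p^{k_i} of the elements of ℤ[1/p]) and Ψ_α is a multiplier on the discrete abelian group ℤ[1/p] × ℤ[1/p]. -/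
open scoped Real

lemma xi_step (p : ℕ) (α : ℕ → ℝ) (hα : XiSeq p α) (k m : ℕ) (z : ℤ) :
    Circle.exp (2 * π * (α (k + m) * ((p : ℝ) ^ m * z))) = Circle.exp (2 * π * (α k * z)) := by
  induction m with
  | zero => simp
  | succ m ih =>
    rw [← ih]
    obtain ⟨j, -, hj⟩ := hα.2 (k + m)
    rw [Circle.exp_eq_exp]
    refine ⟨j * (p : ℤ) ^ m * z, ?_⟩
    have h : (p : ℝ) * α (k + m + 1) = α (k + m) + j := by linarith
    push_cast
    calc 2 * π * (α (k + (m + 1)) * ((p : ℝ) ^ (m + 1) * z))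
        = 2 * π * ((p * α (k + m + 1)) * ((p : ℝ) ^ m * z)) := by
          rw [← add_assoc]; ring
      _ = _ := by rw [h]; ring

lemma xi_indep (p : ℕ) (hp : 1 < p) (α : ℕ → ℝ) (hα : XiSeq p α) (k l : ℕ) (z w : ℤ) (r : ℚ)
    (h1 : r * (p : ℚ) ^ k = z) (h2 : r * (p : ℚ) ^ l = w) :
    Circle.exp (2 * π * (α k * z)) = Circle.exp (2 * π * (α l * w)) := by
  rw [← xi_step p α hα k l z, ← xi_step p α hα l k w, add_comm l k]
  have : (p : ℚ) ^ l * z = (p : ℚ) ^ k * w := by rw [← h1, ← h2]; ring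
  have : (p : ℝ) ^ l * z = (p : ℝ) ^ k * w := by exact_mod_cast this
  rw [this]

open Classical in
/-- The character of `ℤ[1/p]` given by `α`, extended by `1`. -/
noncomputable def xiChar (p : ℕ) (α : ℕ → ℝ) (r : ℚ) : Circle :=
  if h : ∃ x : ℤ × ℕ, r * (p : ℚ) ^ x.2 = x.1 then
    Circle.exp (2 * π * (α h.choose.2 * h.choose.1)) else 1

lemma xiChar_eq (p : ℕ) (hp : 1 < p) (α : ℕ → ℝ) (hα : XiSeq p α) (k : ℕ) (z : ℤ) (r : ℚ)
    (h1 : r * (p : ℚ) ^ k = z) : xiChar p α r = Circle.exp (2 * π * (α k * z)) := by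
  have h : ∃ x : ℤ × ℕ, r * (p : ℚ) ^ x.2 = x.1 := ⟨(z, k), h1⟩
  rw [xiChar, dif_pos h]
  exact xi_indep p hp α hα _ _ _ _ r h.choose_spec h1

lemma xiChar_add (p : ℕ) (hp : 1 < p) (α : ℕ → ℝ) (hα : XiSeq p α) (r s : ℚ)
    (hr : r ∈ pAdicRat p) (hs : s ∈ pAdicRat p) :
    xiChar p α (r + s) = xiChar p α r * xiChar p α s := by
  obtain ⟨z, k, hz⟩ := hr
  obtain ⟨w, l, hw⟩ := hs
  have hr' : r * (p : ℚ) ^ (k + l) = ((z * (p : ℤ) ^ l : ℤ) : ℚ) := by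
    push_cast; rw [← hz]; ring
  have hs' : s * (p : ℚ) ^ (k + l) = ((w * (p : ℤ) ^ k : ℤ) : ℚ) := by
    push_cast; rw [← hw]; ring
  have hrs : (r + s) * (p : ℚ) ^ (k + l) = ((z * (p : ℤ) ^ l + w * (p : ℤ) ^ k : ℤ) : ℚ) := by
    rw [add_mul, hr', hs', ← Int.cast_add]
  rw [xiChar_eq p hp α hα _ _ _ hr', xiChar_eq p hp α hα _ _ _ hs',
    xiChar_eq p hp α hα _ _ _ hrs, ← Circle.exp_add]
  congr 1
  push_cast
  ring

lemma pAdicRat_mul (p : ℕ) (r s : ℚ)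
    (hr : r ∈ pAdicRat p) (hs : s ∈ pAdicRat p) : r * s ∈ pAdicRat p := by
  obtain ⟨z, k, hz⟩ := hr
  obtain ⟨w, l, hw⟩ := hs
  refine ⟨z * w, k + l, ?_⟩
  push_cast
  rw [← hz, ← hw]; ring

/-- For `p > 1` and `α ∈ Ξ_p`, the map `Ψ_α` is well defined (its value does
not depend on the chosen representations `q_i / p^{k_i}`) and is a multiplier on the
discrete abelian group `ℤ[1/p] × ℤ[1/p]`. -/
theorem psi_wellDefined_isMultiplier (p : ℕ) (hp : 1 < p) (α : ℕ → ℝ) (hα : XiSeq p α) :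
    ∃ Ψ : (pAdicRat p × pAdicRat p) → (pAdicRat p × pAdicRat p) → Circle,
      PsiFormula p α Ψ ∧ IsMultiplier Ψ := by
  have h0 : xiChar p α 0 = 1 := by
    rw [xiChar_eq p hp α hα 0 0 0 (by simp)]; simp
  refine ⟨fun g h => xiChar p α ((g.1 : ℚ) * (h.2 : ℚ)), ?_, ?_, ?_⟩
  · intro q1 q2 q3 q4 k1 k2 k3 k4
    have hp0 : (p : ℚ) ≠ 0 := by
      have : p ≠ 0 := by omega
      exact_mod_cast this
    show xiChar p α (((q1 : ℚ) / (p : ℚ) ^ k1) * ((q4 : ℚ) / (p : ℚ) ^ k4)) = _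
    rw [xiChar_eq p hp α hα (k1 + k4) (q1 * q4) _ (by push_cast; rw [pow_add]; field_simp)]
    push_cast
    rw [mul_assoc (α (k1 + k4))]
  · intro g h k
    show xiChar p α ((g.1 : ℚ) * (h.2 : ℚ)) * xiChar p α (((g.1 : ℚ) + (h.1 : ℚ)) * (k.2 : ℚ))
      = xiChar p α ((g.1 : ℚ) * ((h.2 : ℚ) + (k.2 : ℚ))) * xiChar p α ((h.1 : ℚ) * (k.2 : ℚ))
    rw [add_mul, mul_add,
      xiChar_add p hp α hα _ _ (pAdicRat_mul p _ _ g.1.2 k.2.2) (pAdicRat_mul p _ _ h.1.2 k.2.2),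
      xiChar_add p hp α hα _ _ (pAdicRat_mul p _ _ g.1.2 h.2.2) (pAdicRat_mul p _ _ g.1.2 k.2.2),
      mul_assoc]
  · intro g
    simp [h0]
end

section
/- Let p be a natural number with p > 1 and let α, β ∈ Ξ_p. The multipliers Ψ_α and Ψ_β on ℤ[1/p] × ℤ[1/p] are cohomologous if and only if α = β. -/
open scoped Real

/-- For `p > 1` and `α, β ∈ Ξ_p`, the multipliers `Ψ_α` and `Ψ_β` on
`ℤ[1/p] × ℤ[1/p]` are cohomologous if and only if `α = β`. -/
theorem psi_cohomologous_iff_eq (p : ℕ) (hp : 1 < p) (α β : ℕ → ℝ)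
    (hα : XiSeq p α) (hβ : XiSeq p β)
    (Ψα Ψβ : (pAdicRat p × pAdicRat p) → (pAdicRat p × pAdicRat p) → Circle)
    (hΨα : PsiFormula p α Ψα) (hΨβ : PsiFormula p β Ψβ) :
    AreCohomologous Ψα Ψβ ↔ α = β := by
  constructor
  · rintro ⟨f, hf⟩
    funext n
    have h1 := hf (pAdicElem p 1 n, pAdicElem p 0 0) (pAdicElem p 0 0, pAdicElem p 1 0)
    have h2 := hf (pAdicElem p 0 0, pAdicElem p 1 0) (pAdicElem p 1 n, pAdicElem p 0 0)
    rw [hΨα, hΨβ] at h1 h2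
    rw [add_comm (pAdicElem p 0 0, pAdicElem p 1 0)] at h2
    simp only [Int.cast_zero, Int.cast_one, mul_zero, mul_one, add_zero, Circle.exp_zero] at h1 h2
    rw [mul_comm (f (pAdicElem p 0 0, pAdicElem p 1 0))] at h2
    rw [← h2, one_mul, Circle.exp_eq_exp] at h1
    obtain ⟨m, hm⟩ := h1
    have hpi := Real.pi_pos
    have h3 : α n = β n + m := by
      have : (2 * π) * α n = (2 * π) * (β n + m) := by rw [hm]; ring
      exact mul_left_cancel₀ (by positivity) this
    have ha := hα.1 n
    have hb := hβ.1 n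
    have l1 : (m : ℝ) < 1 := by linarith [ha.2, hb.1]
    have l2 : (-1 : ℝ) < m := by linarith [ha.1, hb.2]
    have l1' : m < 1 := by exact_mod_cast l1
    have l2' : -1 < m := by exact_mod_cast l2
    have : m = 0 := by omega
    simpa [this] using h3
  · rintro rfl
    have key : ∀ x : pAdicRat p, ∃ (q : ℤ) (k : ℕ), x = pAdicElem p q k := by
      rintro ⟨x, z, k, h⟩
      refine ⟨z, k, Subtype.ext ?_⟩
      have : ((p : ℚ)) ^ k ≠ 0 := by positivity
      exact (eq_div_iff this).2 h
    refine ⟨fun _ => 1, ?_⟩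
    rintro ⟨a, b⟩ ⟨c, d⟩
    obtain ⟨q1, k1, rfl⟩ := key a
    obtain ⟨q2, k2, rfl⟩ := key b
    obtain ⟨q3, k3, rfl⟩ := key c
    obtain ⟨q4, k4, rfl⟩ := key d
    rw [hΨα, hΨβ]
    simp
end

section
/- Let p be a natural number with p > 1. Every multiplier on the discrete abelian group ℤ[1/p] × ℤ[1/p] is cohomologous to Ψ_α for some α ∈ Ξ_p; moreover, for α, β ∈ Ξ_p, the pointwise product Ψ_α·Ψ_β is cohomologous to Ψ_γ, where γ_n = α_n + β_n mod 1 (so that γ ∈ Ξ_p is the sum of α and β in the group Ξ_p under pointwise addition modulo 1). -/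
open scoped Real

namespace PsiAux

/-- The set underlying the extension attached to a cocycle. -/
structure ExtG (G M : Type*) where
  fst : G
  snd : M

theorem ExtG.ext' {G M : Type*} {x y : ExtG G M} (h1 : x.fst = y.fst) (h2 : x.snd = y.snd) :
    x = y := by
  cases x; cases y; simp_all

/-- The abelian extension attached to a symmetric cocycle. -/
abbrev extGroup {G M : Type*} [AddCommGroup G] [AddCommGroup M] (c : G → G → M)
    (hc : ∀ g h k, c g h + c (g + h) k = c g (h + k) + c h k)
    (h0 : ∀ g, c g 0 = 0) (h0' : ∀ g, c 0 g = 0) (hs : ∀ g h, c g h = c h g) :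
    AddCommGroup (ExtG G M) where
  add x y := ⟨x.fst + y.fst, x.snd + y.snd + c x.fst y.fst⟩
  zero := ⟨0, 0⟩
  neg x := ⟨-x.fst, -x.snd - c x.fst (-x.fst)⟩
  nsmul := @nsmulRec _ ⟨(⟨0, 0⟩ : ExtG G M)⟩
    ⟨fun x y => ⟨x.fst + y.fst, x.snd + y.snd + c x.fst y.fst⟩⟩
  zsmul := @zsmulRec _ ⟨(⟨0, 0⟩ : ExtG G M)⟩
    ⟨fun x y => ⟨x.fst + y.fst, x.snd + y.snd + c x.fst y.fst⟩⟩
    ⟨fun x => ⟨-x.fst, -x.snd - c x.fst (-x.fst)⟩⟩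
    (@nsmulRec _ ⟨(⟨0, 0⟩ : ExtG G M)⟩
    ⟨fun x y => ⟨x.fst + y.fst, x.snd + y.snd + c x.fst y.fst⟩⟩)
  add_assoc x y z := by
    refine ExtG.ext' (add_assoc _ _ _) ?_
    change x.snd + y.snd + c x.fst y.fst + z.snd + c (x.fst + y.fst) z.fst =
      x.snd + (y.snd + z.snd + c y.fst z.fst) + c x.fst (y.fst + z.fst)
    have := hc x.fst y.fst z.fst
    grind
  zero_add x := by
    refine ExtG.ext' (zero_add _) ?_
    change 0 + x.snd + c 0 x.fst = x.snd
    simp [h0']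
  add_zero x := by
    refine ExtG.ext' (add_zero _) ?_
    change x.snd + 0 + c x.fst 0 = x.snd
    simp [h0]
  neg_add_cancel x := by
    refine ExtG.ext' (neg_add_cancel _) ?_
    change -x.snd - c x.fst (-x.fst) + x.snd + c (-x.fst) x.fst = 0
    rw [hs (-x.fst)]; abel
  add_comm x y := by
    refine ExtG.ext' (add_comm _ _) ?_
    change x.snd + y.snd + c x.fst y.fst = y.snd + x.snd + c y.fst x.fst
    rw [hs y.fst]; abel

theorem symm_trivial {G M : Type*} [AddCommGroup G] [AddCommGroup M] (hM : Module.Baer ℤ M)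
    (c : G → G → M)
    (hc : ∀ g h k, c g h + c (g + h) k = c g (h + k) + c h k)
    (h0 : ∀ g, c g 0 = 0) (h0' : ∀ g, c 0 g = 0) (hs : ∀ g h, c g h = c h g) :
    ∃ f : G → M, ∀ g h, c g h = f g + f h - f (g + h) := by
  letI := extGroup c hc h0 h0' hs
  have hadd : ∀ x y : ExtG G M, x + y = ⟨x.fst + y.fst, x.snd + y.snd + c x.fst y.fst⟩ :=
    fun _ _ => rfl
  let i : M →+ ExtG G M :=
    { toFun := fun m => ⟨0, m⟩
      map_zero' := rfl
      map_add' := fun x y => by rw [hadd]; simp [h0] }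
  have hi : Function.Injective i := fun x y h => congrArg ExtG.snd h
  obtain ⟨r, hr⟩ := hM.extension_property_addMonoidHom i hi (AddMonoidHom.id M)
  have hr' : ∀ m, r ⟨0, m⟩ = m := fun m => DFunLike.congr_fun hr m
  refine ⟨fun g => r ⟨g, 0⟩, fun g h => ?_⟩
  have h1 : (⟨g, 0⟩ + ⟨h, 0⟩ : ExtG G M) = ⟨g + h, 0⟩ + ⟨0, c g h⟩ := by
    rw [hadd, hadd]; simp [h0]
  have h2 := congrArg r h1
  rw [map_add, map_add, hr'] at h2
  rw [h2]; abel

/-- The antisymmetrization of a cocycle, as a bihomomorphism. -/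
def anti {G M : Type*} [AddCommGroup G] [AddCommGroup M] (c : G → G → M)
    (hc : ∀ g h k, c g h + c (g + h) k = c g (h + k) + c h k) : G →+ G →+ M :=
  have key : ∀ g h k, c (g + h) k - c k (g + h) = (c g k - c k g) + (c h k - c k h) := by
    intro g h k
    have e1 := hc g h k
    have e2 := hc k g h
    have e3 := hc g k h
    rw [add_comm k h, add_comm g k] at e3
    grind
  AddMonoidHom.mk' (fun g => AddMonoidHom.mk' (fun h => c g h - c h g) (by
    intro a b
    have := key a b g
    grind)) (by
    intro a b
    ext k
    exact key a b k)

theorem anti_apply {G M : Type*} [AddCommGroup G] [AddCommGroup M] (c : G → G → M)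
    (hc : ∀ g h k, c g h + c (g + h) k = c g (h + k) + c h k) (g h : G) :
    anti c hc g h = c g h - c h g := rfl

theorem main {A M : Type*} [AddCommGroup A] [AddCommGroup M] (hM : Module.Baer ℤ M)
    (hA : ∀ x y : A, ∃ (u : A) (m n : ℤ), x = m • u ∧ y = n • u)
    (c : A × A → A × A → M)
    (hc : ∀ g h k, c g h + c (g + h) k = c g (h + k) + c h k)
    (h0 : ∀ g, c g 0 = 0) (h0' : ∀ g, c 0 g = 0) :
    ∃ (B : A →+ A →+ M) (f : A × A → M),
      ∀ g h, c g h = f g + f h - f (g + h) + B g.1 h.2 := by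
  let T := anti c hc
  have hTs : ∀ g, T g g = 0 := fun g => by simp [T, anti_apply]
  have hTa : ∀ g h, T g h = - T h g := fun g h => by simp [T, anti_apply]
  have hl : ∀ (x y : A) (j : A →+ A × A), T (j x) (j y) = 0 := by
    intro x y j
    obtain ⟨u, m, n, rfl, rfl⟩ := hA x y
    simp [hTs]
  let B : A →+ A →+ M :=
    (T.comp (AddMonoidHom.inl A A)).compl₂ (AddMonoidHom.inr A A)
  have hB : ∀ a d, B a d = T (a, 0) (0, d) := fun _ _ => rfl
  have hT : ∀ g h, T g h = B g.1 h.2 - B h.1 g.2 := by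
    rintro ⟨a, b⟩ ⟨x, y⟩
    have e1 : ((a, b) : A × A) = (a, 0) + (0, b) := by simp
    have e2 : ((x, y) : A × A) = (x, 0) + (0, y) := by simp
    have e3 := hl a x (AddMonoidHom.inl A A)
    have e4 := hl b y (AddMonoidHom.inr A A)
    have e5 := hTa (0, b) (x, 0)
    simp only [AddMonoidHom.inl_apply, AddMonoidHom.inr_apply] at e3 e4
    rw [hB, hB, e1, e2]
    simp only [map_add, AddMonoidHom.add_apply, e3, e4, e5, Prod.fst_add, Prod.snd_add]
    simp
    abel
  obtain ⟨f, hf⟩ := symm_trivial hM (fun g h => c g h - B g.1 h.2)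
    (by
      intro g h k
      have := hc g h k
      simp only [Prod.fst_add, Prod.snd_add, map_add, AddMonoidHom.add_apply]
      grind)
    (by simp [h0]) (by simp [h0'])
    (by
      intro g h
      have := hT g h
      rw [anti_apply] at this
      grind)
  refine ⟨B, f, fun g h => ?_⟩
  rw [← hf]; abel

theorem exp_mul_int (x : ℝ) (n : ℤ) : Circle.exp (x * n) = Circle.exp x ^ n := by
  rw [mul_comm]; simpa using map_zsmul Circle.expHom n x

theorem baer_circle : Module.Baer ℤ (Additive Circle) := by
  letI : DivisibleBy (Additive Circle) ℤ := divisibleByOfSMulRightSurj _ _ (by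
    intro n hn a
    obtain ⟨x, hx⟩ := Circle.exp_surjective a.toMul
    refine ⟨Additive.ofMul (Circle.exp (x / n)), ?_⟩
    change Additive.ofMul (Circle.exp (x / n) ^ n) = a
    rw [← exp_mul_int, div_mul_cancel₀ _ (by exact_mod_cast hn), hx]; rfl)
  exact Module.Baer.of_divisible _

theorem elem_eq (p : ℕ) (q : ℤ) (k : ℕ) : pAdicElem p q k = q • pAdicElem p 1 k := by
  apply Subtype.ext
  simp [pAdicElem, div_eq_mul_inv]

theorem elem_shift {p : ℕ} (hp : 1 < p) (k j : ℕ) :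
    pAdicElem p 1 k = ((p : ℤ) ^ j) • pAdicElem p 1 (k + j) := by
  apply Subtype.ext
  have : (p : ℚ) ≠ 0 := by positivity
  simp [pAdicElem]
  field_simp
  rw [pow_add]

theorem exists_elem {p : ℕ} (hp : 1 < p) (x : pAdicRat p) : ∃ q k, x = pAdicElem p q k := by
  obtain ⟨x, z, k, h⟩ := x
  refine ⟨z, k, Subtype.ext ?_⟩
  have : (p : ℚ) ≠ 0 := by positivity
  simp [pAdicElem, ← h, this]

theorem loc_cyc {p : ℕ} (hp : 1 < p) (x y : pAdicRat p) :
    ∃ (u : pAdicRat p) (m n : ℤ), x = m • u ∧ y = n • u := by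
  obtain ⟨q, k, rfl⟩ := exists_elem hp x
  obtain ⟨r, l, rfl⟩ := exists_elem hp y
  refine ⟨pAdicElem p 1 (k + l), q * p ^ l, r * p ^ k, ?_, ?_⟩
  · rw [elem_eq, elem_shift hp k l, mul_smul]
  · rw [elem_eq, elem_shift hp l k, mul_smul, add_comm l k]

theorem xi_aux {p : ℕ} (x y : ℝ) (hx : x ∈ Set.Ico (0 : ℝ) 1) (hy : y ∈ Set.Ico (0 : ℝ) 1)
    (hp : 1 < p) (j : ℤ) (h : p * y - x = j) : ∃ j : ℕ, j < p ∧ (p : ℝ) * y - x = j := by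
  obtain ⟨hx0, hx1⟩ := hx
  obtain ⟨hy0, hy1⟩ := hy
  have hp' : (0 : ℝ) < p := by positivity
  have h1 : (-1 : ℝ) < j := by rw [← h]; nlinarith
  have h2 : (j : ℝ) < p := by rw [← h]; nlinarith
  have h1' : -1 < j := by exact_mod_cast h1
  have h2' : j < p := by exact_mod_cast h2
  lift j to ℕ using by omega
  exact ⟨j, by exact_mod_cast h2', by rw [h]; simp⟩

theorem exists_angle (z : Circle) : ∃ a : ℝ, a ∈ Set.Ico (0 : ℝ) 1 ∧ Circle.exp (2 * π * a) = z := by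
  obtain ⟨x, hx⟩ := Circle.exp_surjective z
  refine ⟨Int.fract (x / (2 * π)), ⟨Int.fract_nonneg _, Int.fract_lt_one _⟩, ?_⟩
  rw [← hx, Circle.exp_eq_exp]
  refine ⟨-⌊x / (2 * π)⌋, ?_⟩
  rw [Int.fract]
  have := Real.pi_pos
  push_cast
  field_simp
  ring

end PsiAux


/-- For `p > 1`, every multiplier on `ℤ[1/p] × ℤ[1/p]` is cohomologous to
`Ψ_γ` for some `γ ∈ Ξ_p`; moreover, for `α, β ∈ Ξ_p` the pointwise product `Ψ_α · Ψ_β` is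
cohomologous to `Ψ_γ` where `γ_n = α_n + β_n mod 1` (and this `γ` belongs to `Ξ_p`, being
the sum of `α` and `β` in the group `Ξ_p` under pointwise addition modulo one). -/
theorem multiplier_cohomologous_psi_and_product (p : ℕ) (hp : 1 < p) :
    (∀ σ : (pAdicRat p × pAdicRat p) → (pAdicRat p × pAdicRat p) → Circle,
      IsMultiplier σ →
        ∃ γ : ℕ → ℝ, XiSeq p γ ∧
          ∃ Ψ : (pAdicRat p × pAdicRat p) → (pAdicRat p × pAdicRat p) → Circle,
            PsiFormula p γ Ψ ∧ AreCohomologous σ Ψ) ∧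
    ∀ α β : ℕ → ℝ, XiSeq p α → XiSeq p β →
      XiSeq p (fun n => Int.fract (α n + β n)) ∧
      ∀ Ψα Ψβ Ψγ : (pAdicRat p × pAdicRat p) → (pAdicRat p × pAdicRat p) → Circle,
        PsiFormula p α Ψα → PsiFormula p β Ψβ →
        PsiFormula p (fun n => Int.fract (α n + β n)) Ψγ →
        AreCohomologous (fun x y => Ψα x y * Ψβ x y) Ψγ := by
  constructor
  · rintro σ ⟨hσ, hσ0⟩
    obtain ⟨B, f, hf⟩ := PsiAux.main PsiAux.baer_circle (PsiAux.loc_cyc hp)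
      (fun g h => Additive.ofMul (σ g h)) (fun g h k => congrArg Additive.ofMul (hσ g h k))
      (fun g => congrArg Additive.ofMul (hσ0 g).1) (fun g => congrArg Additive.ofMul (hσ0 g).2)
    choose γ hγ1 hγ2 using fun n : ℕ =>
      PsiAux.exists_angle (B (pAdicElem p 1 0) (pAdicElem p 1 n)).toMul
    refine ⟨γ, ⟨hγ1, fun n => ?_⟩, fun x y => (B x.1 y.2).toMul, ?_, fun g => (f g).toMul, ?_⟩
    · have h1 : Circle.exp (2 * π * γ (n + 1)) ^ (p : ℤ) = Circle.exp (2 * π * γ n) := by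
        rw [hγ2, hγ2, PsiAux.elem_shift hp n 1, map_zsmul, pow_one]; rfl
      rw [← PsiAux.exp_mul_int, Circle.exp_eq_exp] at h1
      obtain ⟨m, hm⟩ := h1
      refine PsiAux.xi_aux _ _ (hγ1 n) (hγ1 (n + 1)) hp m ?_
      have hpi := Real.pi_pos
      have : (2 * π) * (p * γ (n + 1) - γ n) = (2 * π) * m := by
        push_cast at hm
        linear_combination hm
      exact mul_left_cancel₀ (by positivity) this
    · intro q1 q2 q3 q4 k1 k2 k3 k4
      have e : B (pAdicElem p 1 k1) (pAdicElem p 1 k4)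
          = B (pAdicElem p 1 0) (pAdicElem p 1 (k1 + k4)) := by
        rw [PsiAux.elem_shift hp k4 k1, PsiAux.elem_shift hp 0 k1]
        simp [add_comm]
      have e2 : (2 * π * (γ (k1 + k4) * q1 * q4)) = (2 * π * γ (k1 + k4)) * ((q1 * q4 : ℤ) : ℝ) := by
        push_cast; ring
      rw [e2, PsiAux.exp_mul_int, hγ2, ← e, PsiAux.elem_eq p q1, PsiAux.elem_eq p q4]
      change (B (q1 • pAdicElem p 1 k1) (q4 • pAdicElem p 1 k4)).toMul = _
      have e3 : B (q1 • pAdicElem p 1 k1) (q4 • pAdicElem p 1 k4)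
          = (q1 * q4) • B (pAdicElem p 1 k1) (pAdicElem p 1 k4) := by
        rw [map_zsmul B, AddMonoidHom.smul_apply, map_zsmul (B _), smul_smul]
      rw [e3]
      rfl
    · intro g h
      have := congrArg Additive.toMul (hf g h)
      simpa [div_eq_mul_inv] using this
  · intro α β hα hβ
    refine ⟨⟨fun n => ⟨Int.fract_nonneg _, Int.fract_lt_one _⟩, fun n => ?_⟩, ?_⟩
    · obtain ⟨i, -, hi⟩ := hα.2 n
      obtain ⟨j, -, hj⟩ := hβ.2 n
      refine PsiAux.xi_aux _ _ ⟨Int.fract_nonneg _, Int.fract_lt_one _⟩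
        ⟨Int.fract_nonneg _, Int.fract_lt_one _⟩ hp
        (i + j - p * ⌊α (n + 1) + β (n + 1)⌋ + ⌊α n + β n⌋) ?_
      simp only [Int.fract]
      push_cast
      linear_combination hi + hj
    · intro Ψα Ψβ Ψγ h1 h2 h3
      refine ⟨fun _ => 1, ?_⟩
      rintro ⟨a, b⟩ ⟨c, d⟩
      obtain ⟨q1, k1, rfl⟩ := PsiAux.exists_elem hp a
      obtain ⟨q2, k2, rfl⟩ := PsiAux.exists_elem hp b
      obtain ⟨q3, k3, rfl⟩ := PsiAux.exists_elem hp c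
      obtain ⟨q4, k4, rfl⟩ := PsiAux.exists_elem hp d
      simp only [h1 q1 q2 q3 q4 k1 k2 k3 k4, h2 q1 q2 q3 q4 k1 k2 k3 k4,
        h3 q1 q2 q3 q4 k1 k2 k3 k4, mul_one, inv_one, one_mul]
      rw [← Circle.exp_add, Circle.exp_eq_exp]
      refine ⟨⌊α (k1 + k4) + β (k1 + k4)⌋ * q1 * q4, ?_⟩
      simp only [Int.fract]
      push_cast
      ring
end

section
/- Let p be a natural number with p > 1. Every multiplier on the discrete group ℤ[1/p] is trivial: for any multiplier σ on ℤ[1/p] there exists f : ℤ[1/p] → 𝕋 such that σ(r,s) = f(r)·f(s)·f(r+s)^{-1} for all r,s ∈ ℤ[1/p]. -/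
open scoped Real

/-- The central extension of `G` by the circle determined by a multiplier. -/
@[ext]
structure TwExt {G : Type*} [AddCommGroup G] (σ : G → G → Circle) where
  c : Circle
  g : G

namespace TwExt

variable {G : Type*} [AddCommGroup G] {σ : G → G → Circle}

/-- The group structure of the central extension. -/
@[reducible]
noncomputable def grp (hσ : IsMultiplier σ) : Group (TwExt σ) :=
  letI : Mul (TwExt σ) := ⟨fun a b => ⟨a.c * b.c * σ a.g b.g, a.g + b.g⟩⟩
  letI : One (TwExt σ) := ⟨⟨1, 0⟩⟩
  letI : Inv (TwExt σ) := ⟨fun a => ⟨a.c⁻¹ * (σ (-a.g) a.g)⁻¹, -a.g⟩⟩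
  Group.ofLeftAxioms
    (by
      intro a b d
      refine TwExt.ext ?_ (add_assoc _ _ _)
      change a.c * b.c * σ a.g b.g * d.c * σ (a.g + b.g) d.g
        = a.c * (b.c * d.c * σ b.g d.g) * σ a.g (b.g + d.g)
      have h := hσ.1 a.g b.g d.g
      calc _ = a.c * b.c * d.c * (σ a.g b.g * σ (a.g + b.g) d.g) := by
            simp only [mul_assoc, mul_left_comm, mul_comm]
        _ = _ := by rw [h]; simp only [mul_assoc, mul_left_comm, mul_comm])
    (by
      intro a
      refine TwExt.ext ?_ (zero_add _)
      change 1 * a.c * σ 0 a.g = a.c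
      rw [(hσ.2 a.g).2]; simp)
    (by
      intro a
      refine TwExt.ext ?_ (neg_add_cancel _)
      change a.c⁻¹ * (σ (-a.g) a.g)⁻¹ * a.c * σ (-a.g) a.g = 1
      rw [mul_right_comm a.c⁻¹]; simp)

theorem main (hσ : IsMultiplier σ)
    (hcyc : ∀ r s : G, ∃ (x : G) (m n : ℤ), r = m • x ∧ s = n • x) :
    ∃ f : G → Circle, ∀ r s : G, σ r s = f r * f s * (f (r + s))⁻¹ := by
  letI := grp hσ
  have hmul : ∀ a b : TwExt σ, a * b = ⟨a.c * b.c * σ a.g b.g, a.g + b.g⟩ := fun _ _ => rfl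
  have hcen : ∀ (c : Circle) (b : TwExt σ), (⟨c, 0⟩ : TwExt σ) * b = ⟨c * b.c, b.g⟩ := by
    intro c b; rw [hmul]; ext1
    · simp [(hσ.2 b.g).2]
    · simp
  have hcen' : ∀ (c : Circle) (b : TwExt σ), b * (⟨c, 0⟩ : TwExt σ) = ⟨c * b.c, b.g⟩ := by
    intro c b; rw [hmul]; ext1
    · simp [(hσ.2 b.g).1, mul_comm]
    · simp
  have hcc : ∀ (c : Circle) (b : TwExt σ), Commute (⟨c, 0⟩ : TwExt σ) b := fun c b =>
    (hcen c b).trans (hcen' c b).symm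
  let π' : TwExt σ →* Multiplicative G :=
    { toFun := fun a => Multiplicative.ofAdd a.g, map_one' := rfl, map_mul' := fun _ _ => rfl }
  have hzp : ∀ (u : TwExt σ) (m : ℤ), (u ^ m).g = m • u.g := fun u m => map_zpow π' u m
  have hdec : ∀ (e u : TwExt σ) (m : ℤ), e.g = m • u.g → ∃ c, e = ⟨c, 0⟩ * u ^ m := by
    intro e u m h
    refine ⟨e.c * (u ^ m).c⁻¹, ?_⟩
    rw [hcen]; ext1
    · simp
    · rw [h, hzp]
  have hcomm : ∀ a b : TwExt σ, a * b = b * a := by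
    intro a b
    obtain ⟨x, m, n, h1, h2⟩ := hcyc a.g b.g
    obtain ⟨c, hc⟩ := hdec a ⟨1, x⟩ m h1
    obtain ⟨d, hd⟩ := hdec b ⟨1, x⟩ n h2
    rw [hc, hd]
    exact Commute.mul_left (hcc _ _) (Commute.mul_right (hcc _ _).symm
      (((Commute.refl _).zpow_left m).zpow_right n))
  letI : CommGroup (TwExt σ) := { grp hσ with mul_comm := hcomm }
  letI : DivisibleBy (Additive Circle) ℤ :=
    { div := fun a n => if n = 0 then 0 else
        Additive.ofMul (Circle.exp ((n : ℝ)⁻¹ * Complex.arg (a.toMul : Circle)))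
      div_zero := fun a => by simp
      div_cancel := by
        intro n a hn
        have hn' : (n : ℝ) ≠ 0 := by exact_mod_cast hn
        rw [if_neg hn, ← ofMul_zpow, ← Circle.exp_intCast_mul, mul_inv_cancel_left₀ hn',
          Circle.exp_arg]
        rfl }
  let ι : Circle →* TwExt σ :=
    { toFun := fun c => ⟨c, 0⟩, map_one' := rfl, map_mul' := fun c d => (hcen c ⟨d, 0⟩).symm }
  obtain ⟨ρ, hρ⟩ := (Module.Baer.of_divisible (Additive Circle)).extension_property_addMonoidHom
    (MonoidHom.toAdditive ι) (fun a b h => congrArg TwExt.c h) (AddMonoidHom.id _)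
  let ρ' : TwExt σ →* Circle := MonoidHom.toAdditive.symm ρ
  have hρ' : ∀ c : Circle, ρ' ⟨c, 0⟩ = c := fun c => DFunLike.congr_fun hρ (Additive.ofMul c)
  refine ⟨fun g => ρ' ⟨1, g⟩, fun r s => ?_⟩
  rw [eq_mul_inv_iff_mul_eq, ← map_mul]
  have h1 : (⟨1, r⟩ : TwExt σ) * ⟨1, s⟩ = ⟨σ r s, 0⟩ * ⟨1, r + s⟩ := by
    rw [hcen]
    refine (hmul _ _).trans ?_
    simp
  rw [h1, map_mul, hρ']

end TwExt

/-- For `p > 1`, every multiplier on the discrete group `ℤ[1/p]` is trivial: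
it is a coboundary. -/
theorem multiplier_on_pAdicRat_trivial (p : ℕ) (hp : 1 < p)
    (σ : pAdicRat p → pAdicRat p → Circle) (hσ : IsMultiplier σ) :
    ∃ f : pAdicRat p → Circle, ∀ r s : pAdicRat p, σ r s = f r * f s * (f (r + s))⁻¹ := by
  refine TwExt.main hσ ?_
  rintro ⟨r, z, k, hr⟩ ⟨s, w, l, hs⟩
  have hp0 : (p : ℚ) ≠ 0 := by
    have : p ≠ 0 := by omega
    exact_mod_cast this
  refine ⟨pAdicElem p 1 (k + l), z * (p : ℤ) ^ l, w * (p : ℤ) ^ k, ?_, ?_⟩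
  · apply Subtype.ext
    simp only [pAdicElem, AddSubgroup.coe_zsmul, zsmul_eq_mul]
    push_cast
    rw [← hr, pow_add]
    field_simp
  · apply Subtype.ext
    simp only [pAdicElem, AddSubgroup.coe_zsmul, zsmul_eq_mul]
    push_cast
    rw [← hs, pow_add]
    field_simp
end

section
/- Let p be a natural number with p > 1 and let J = (J_k)_{k∈ℕ} be a sequence of integers with J_0 = 0 and J_{k+1} ≡ J_k (mod p^k) for all k. Then ξ_J takes values in ℤ, is symmetric (ξ_J(r,s) = ξ_J(s,r) for all r,s), satisfies ξ_J(r,0) = ξ_J(0,r) = 0, and satisfies the 2-cocycle identity ξ_J(r,s) + ξ_J(r+s,t) = ξ_J(r,s+t) + ξ_J(s,t) for all r,s,t ∈ ℤ[1/p]; that is, ξ_J is a Schur multiplier of ℤ[1/p]. -/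
open scoped Real

/-- `q / p^k` is the reduced form of the rational `r`: it represents `r` and either `k = 0`
or `p` does not divide `q`. -/
def IsReducedForm (p : ℕ) (r : ℚ) (q : ℤ) (k : ℕ) : Prop :=
  r = (q : ℚ) / (p : ℚ) ^ k ∧ (k = 0 ∨ ¬ ((p : ℤ) ∣ q))

/-- The sequence of integers `J` defines a `p`-adic integer: `J 0 = 0` and
`J (k+1) ≡ J k (mod p^k)` for all `k`. -/
def IsPAdicSeq (p : ℕ) (J : ℕ → ℤ) : Prop :=
  J 0 = 0 ∧ ∀ k : ℕ, (p : ℤ) ^ k ∣ (J (k + 1) - J k)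

/-- The defining formula for the Schur multiplier `ξ_J` of `ℤ[1/p]`, written via reduced
forms of the arguments. -/
def XiJFormula (p : ℕ) (J : ℕ → ℤ) (ξ : pAdicRat p → pAdicRat p → ℚ) : Prop :=
  ∀ (r s : pAdicRat p) (q1 : ℤ) (k1 : ℕ) (q2 : ℤ) (k2 : ℕ),
    IsReducedForm p (r : ℚ) q1 k1 → IsReducedForm p (s : ℚ) q2 k2 →
      (k1 < k2 → ξ r s = -((q1 : ℚ) / (p : ℚ) ^ k1) * ((J k2 : ℚ) - J k1)) ∧
      (k2 < k1 → ξ r s = -((q2 : ℚ) / (p : ℚ) ^ k2) * ((J k1 : ℚ) - J k2)) ∧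
      (k1 = k2 → ∀ (q : ℤ) (m : ℕ), IsReducedForm p ((r : ℚ) + (s : ℚ)) q m →
        ξ r s = ((q : ℚ) / (p : ℚ) ^ m) * ((J k1 : ℚ) - J m))

def lvP (p : ℕ) (r : ℚ) (k : ℕ) : Prop := ∃ z : ℤ, r * (p : ℚ) ^ k = z

noncomputable def lv (p : ℕ) (r : ℚ) : ℕ := sInf {k | lvP p r k}

lemma lvP_mono {p : ℕ} {r : ℚ} {j k : ℕ} (h : lvP p r j) (hjk : j ≤ k) : lvP p r k := by
  obtain ⟨z, hz⟩ := h
  obtain ⟨c, rfl⟩ := Nat.exists_eq_add_of_le hjk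
  refine ⟨z * (p : ℤ) ^ c, ?_⟩
  push_cast
  rw [← hz, pow_add]; ring

lemma lvP_add {p : ℕ} {r s : ℚ} {k : ℕ} (h : lvP p r k) (h' : lvP p s k) :
    lvP p (r + s) k := by
  obtain ⟨z, hz⟩ := h
  obtain ⟨w, hw⟩ := h'
  exact ⟨z + w, by push_cast; rw [← hz, ← hw]; ring⟩

lemma lvP_neg {p : ℕ} {r : ℚ} {k : ℕ} (h : lvP p r k) : lvP p (-r) k := by
  obtain ⟨z, hz⟩ := h
  exact ⟨-z, by push_cast; rw [← hz]; ring⟩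

lemma lv_spec {p : ℕ} {r : ℚ} (h : r ∈ pAdicRat p) : lvP p r (lv p r) := by
  obtain ⟨z, k, hk⟩ := h
  exact Nat.sInf_mem (s := {k | lvP p r k}) ⟨k, z, hk⟩

lemma lv_le {p : ℕ} {r : ℚ} {k : ℕ} (h : lvP p r k) : lv p r ≤ k := Nat.sInf_le h

lemma lv_add_lt {p : ℕ} {r s : ℚ} (hr : r ∈ pAdicRat p) (hs : s ∈ pAdicRat p)
    (h : lv p r < lv p s) : lv p (r + s) = lv p s := by
  apply le_antisymm
  · exact lv_le (lvP_add (lvP_mono (lv_spec hr) h.le) (lv_spec hs))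
  · by_contra hc
    push Not at hc
    have h1 := lv_spec ((pAdicRat p).add_mem hr hs)
    have h2 := lvP_add (lvP_mono h1 (le_max_left _ (lv p r)))
      (lvP_neg (lvP_mono (lv_spec hr) (le_max_right (lv p (r + s)) _)))
    have h3 := lv_le h2
    rw [show r + s + -r = s by ring] at h3
    have := max_lt hc h
    omega

lemma lv_add_eq {p : ℕ} {r s : ℚ} (hr : r ∈ pAdicRat p) (hs : s ∈ pAdicRat p)
    (h : lv p r = lv p s) : lv p (r + s) ≤ lv p s :=
  lv_le (lvP_add (lvP_mono (lv_spec hr) h.le) (lv_spec hs))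

lemma lv_reduced {p : ℕ} (hp : 1 < p) {r : ℚ} {q : ℤ} {k : ℕ} (h : IsReducedForm p r q k) :
    lv p r = k := by
  obtain ⟨h1, h2⟩ := h
  have hp0 : (p : ℚ) ≠ 0 := by positivity
  have hk : r * (p : ℚ) ^ k = q := by rw [h1]; field_simp
  apply le_antisymm (lv_le ⟨q, hk⟩)
  by_contra hc
  push Not at hc
  obtain ⟨z, hz⟩ := lv_spec (p := p) (r := r) ⟨q, k, hk⟩
  rcases h2 with h2 | h2
  · omega
  · apply h2
    obtain ⟨c, hcc⟩ := Nat.exists_eq_add_of_lt hc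
    refine ⟨z * (p : ℤ) ^ c, ?_⟩
    have : (q : ℚ) = p * (z * p ^ c) := by
      rw [← hk, ← hz, show k = lv p r + c + 1 from hcc, pow_succ, pow_add]; ring
    exact_mod_cast this

lemma J_dvd {p : ℕ} {J : ℕ → ℤ} (hJ : IsPAdicSeq p J) {j k : ℕ} (h : j ≤ k) :
    (p : ℤ) ^ j ∣ J k - J j := by
  induction k, h using Nat.le_induction with
  | base => simp
  | succ n hn ih =>
    have := dvd_add ((pow_dvd_pow (p : ℤ) hn).trans (hJ.2 n)) ih
    rwa [sub_add_sub_cancel] at this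

lemma J_int {p : ℕ} {J : ℕ → ℤ} (hJ : IsPAdicSeq p J) {r : ℚ} (hr : r ∈ pAdicRat p) {k : ℕ}
    (h : lv p r ≤ k) : ∃ z : ℤ, r * ((J k : ℚ) - J (lv p r)) = z := by
  obtain ⟨c, hc⟩ := J_dvd hJ h
  obtain ⟨z, hz⟩ := lv_spec hr
  refine ⟨z * c, ?_⟩
  have : (J k : ℚ) - J (lv p r) = p ^ (lv p r) * c := by exact_mod_cast hc
  rw [this]; push_cast; rw [← hz]; ring

/-- For `p > 1` and a sequence of integers `J` with `J 0 = 0` and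
`J (k+1) ≡ J k (mod p^k)`, the map `ξ_J` is well defined, takes integer values, is
symmetric, vanishes when one argument is `0`, and satisfies the 2-cocycle identity:
it is a Schur multiplier of `ℤ[1/p]`. -/
theorem xiJ_is_schur_multiplier (p : ℕ) (hp : 1 < p) (J : ℕ → ℤ) (hJ : IsPAdicSeq p J) :
    ∃ ξ : pAdicRat p → pAdicRat p → ℚ,
      XiJFormula p J ξ ∧
      (∀ r s : pAdicRat p, ∃ z : ℤ, ξ r s = z) ∧
      (∀ r s : pAdicRat p, ξ r s = ξ s r) ∧
      (∀ r : pAdicRat p, ξ r 0 = 0 ∧ ξ 0 r = 0) ∧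
      (∀ r s t : pAdicRat p, ξ r s + ξ (r + s) t = ξ r (s + t) + ξ s t) := by
  refine ⟨fun r s => (r : ℚ) * J (lv p r) + (s : ℚ) * J (lv p s)
    - ((r : ℚ) + s) * J (lv p ((r : ℚ) + s)), ?_, ?_, ?_, ?_, ?_⟩
  · intro r s q1 k1 q2 k2 h1 h2
    have e1 := lv_reduced hp h1
    have e2 := lv_reduced hp h2
    refine ⟨fun h => ?_, fun h => ?_, fun h q m hm => ?_⟩
    · have := lv_add_lt r.2 s.2 (by omega)
      simp only [this, e1, e2]
      rw [← h1.1]; ring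
    · have := lv_add_lt s.2 r.2 (by omega)
      rw [add_comm] at this
      simp only [this, e1, e2]
      rw [← h2.1]; ring
    · have e3 := lv_reduced hp hm
      simp only [e1, e2, e3]
      rw [← hm.1, h]; ring
  · intro r s
    rcases lt_trichotomy (lv p r) (lv p s) with h | h | h
    · obtain ⟨z, hz⟩ := J_int hJ r.2 h.le
      refine ⟨-z, ?_⟩
      simp only [lv_add_lt r.2 s.2 h]
      push_cast; rw [← hz]; ring
    · obtain ⟨z, hz⟩ := J_int hJ ((pAdicRat p).add_mem r.2 s.2) (lv_add_eq r.2 s.2 h)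
      refine ⟨z, ?_⟩
      rw [← hz]
      simp only [h]
      ring
    · obtain ⟨z, hz⟩ := J_int hJ s.2 h.le
      refine ⟨-z, ?_⟩
      have := lv_add_lt s.2 r.2 h
      rw [add_comm] at this
      simp only [this]
      push_cast; rw [← hz]; ring
  · intro r s
    simp only [add_comm (s : ℚ) (r : ℚ)]
    ring
  · intro r
    simp
  · intro r s t
    simp only [AddSubgroup.coe_add, add_assoc]
    ring
end

section
/- Let p be a natural number with p > 1 and let J = (J_k) and K = (K_k) be sequences of integers with J_0 = K_0 = 0, J_{k+1} ≡ J_k (mod p^k) and K_{k+1} ≡ K_k (mod p^k) for all k. The Schur multipliers ξ_J and ξ_K of ℤ[1/p] are cohomologous if and only if there exists m ∈ ℤ such that J_k ≡ K_k + m (mod p^k) for all k ∈ ℕ (i.e. the p-adic integer J − K is the image of an ordinary integer). -/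
open scoped Real

theorem aux_exists (p : ℕ) (hp : 1 < p) (r : pAdicRat p) :
    ∃ (q : ℤ) (k : ℕ), IsReducedForm p (r : ℚ) q k := by
  obtain ⟨r, z, k, h⟩ := r
  have hp0 : (p : ℚ) ≠ 0 := by positivity
  have h' : r = (z : ℚ) / (p : ℚ) ^ k := by field_simp; exact h
  show ∃ (q : ℤ) (k : ℕ), IsReducedForm p r q k
  clear h
  induction k generalizing z with
  | zero => exact ⟨z, 0, h', Or.inl rfl⟩
  | succ k ih =>
    by_cases hd : (p : ℤ) ∣ z
    · obtain ⟨w, rfl⟩ := hd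
      apply ih w
      rw [h']
      push_cast
      field_simp
      ring
    · exact ⟨z, k + 1, h', Or.inr hd⟩

theorem aux_le (p : ℕ) (hp : 1 < p) (r : ℚ) (q q' : ℤ) (k k' : ℕ)
    (h : IsReducedForm p r q k) (h' : r = (q' : ℚ) / (p : ℚ) ^ k') : k ≤ k' := by
  by_contra hlt
  push Not at hlt
  have hp0 : (p : ℚ) ≠ 0 := by positivity
  obtain ⟨h1, h2⟩ := h
  obtain ⟨d, rfl⟩ := Nat.exists_eq_add_of_lt hlt
  rcases h2 with h2 | h2
  · omega
  · apply h2
    refine ⟨q' * (p : ℤ) ^ d, ?_⟩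
    have h3 : (q : ℚ) = p * (q' * (p : ℚ) ^ d) := by
      have h4 : (q : ℚ) = r * (p : ℚ) ^ (k' + d + 1) := by rw [h1]; field_simp
      rw [h4, h', pow_succ, pow_add]; field_simp
    exact_mod_cast h3

theorem aux_sum (p : ℕ) (hp : 1 < p) (r s : ℚ) (q1 q2 : ℤ) (k1 k2 : ℕ) (hlt : k1 < k2)
    (h1 : IsReducedForm p r q1 k1) (h2 : IsReducedForm p s q2 k2) :
    IsReducedForm p (r + s) (q1 * (p : ℤ) ^ (k2 - k1) + q2) k2 := by
  have hp0 : (p : ℚ) ≠ 0 := by positivity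
  obtain ⟨h1, -⟩ := h1
  obtain ⟨h2, h3⟩ := h2
  obtain ⟨d, rfl⟩ := Nat.exists_eq_add_of_lt hlt
  have e : k1 + d + 1 - k1 = d + 1 := by omega
  rw [e]
  refine ⟨?_, Or.inr ?_⟩
  · rw [h1, h2]; push_cast; simp only [pow_succ, pow_add]; field_simp
  · rcases h3 with h3 | h3
    · omega
    · intro hd
      apply h3
      refine (Int.dvd_add_right ?_).1 hd
      exact Dvd.intro_left (q1 * (p : ℤ) ^ d) (by ring)

theorem aux_g (p : ℕ) (hp : 1 < p) (J K : ℕ → ℤ)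
    (ξJ ξK : pAdicRat p → pAdicRat p → ℚ)
    (hξJ : XiJFormula p J ξJ) (hξK : XiJFormula p K ξK) :
    ∃ g : pAdicRat p → ℚ,
      (∀ (r : pAdicRat p) (q : ℤ) (k : ℕ), IsReducedForm p (r : ℚ) q k →
        g r = (r : ℚ) * ((J k : ℚ) - K k)) ∧
      ∀ r s, ξJ r s - ξK r s = g r + g s - g (r + s) := by
  choose q k hk using aux_exists p hp
  have hg : ∀ (r : pAdicRat p) (q' : ℤ) (k' : ℕ), IsReducedForm p (r : ℚ) q' k' →
        (r : ℚ) * ((J (k r) : ℚ) - K (k r)) = (r : ℚ) * ((J k' : ℚ) - K k') := by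
    intro r q' k' h
    have : k r = k' := le_antisymm (aux_le p hp _ _ _ _ _ (hk r) h.1)
      (aux_le p hp _ _ _ _ _ h (hk r).1)
    rw [this]
  refine ⟨fun r => (r : ℚ) * ((J (k r) : ℚ) - K (k r)), hg, ?_⟩
  intro r s
  obtain ⟨a1, a2, a3⟩ := hξJ r s _ _ _ _ (hk r) (hk s)
  obtain ⟨b1, b2, b3⟩ := hξK r s _ _ _ _ (hk r) (hk s)
  have er := (hk r).1
  have es := (hk s).1
  beta_reduce
  rcases lt_trichotomy (k r) (k s) with h | h | h
  · rw [a1 h, b1 h, hg (r + s) _ _ (aux_sum p hp _ _ _ _ _ _ h (hk r) (hk s)), ← er]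
    push_cast; ring
  · have ers := (hk (r + s)).1
    rw [a3 h _ _ (hk (r + s)), b3 h _ _ (hk (r + s)), ← ers, h]
    push_cast; ring
  · have := aux_sum p hp _ _ _ _ _ _ h (hk s) (hk r)
    rw [add_comm] at this
    rw [a2 h, b2 h, hg (r + s) _ _ this, ← es]
    push_cast; ring

/-- For `p > 1` and `p`-adic integers `J`, `K` (given as integer sequences with
`J 0 = K 0 = 0`, `J (k+1) ≡ J k (mod p^k)`, `K (k+1) ≡ K k (mod p^k)`), the Schur
multipliers `ξ_J` and `ξ_K` of `ℤ[1/p]` are cohomologous if and only if there is `m ∈ ℤ`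
with `J k ≡ K k + m (mod p^k)` for all `k`, i.e. `J - K` is the image of an integer. -/
theorem xiJ_cohomologous_iff (p : ℕ) (hp : 1 < p) (J K : ℕ → ℤ)
    (hJ : IsPAdicSeq p J) (hK : IsPAdicSeq p K)
    (ξJ ξK : pAdicRat p → pAdicRat p → ℚ)
    (hξJ : XiJFormula p J ξJ) (hξK : XiJFormula p K ξK) :
    (∃ f : pAdicRat p → ℤ, ∀ r s : pAdicRat p,
        ξJ r s - ξK r s = ((f r : ℚ) + f s - f (r + s))) ↔
      ∃ m : ℤ, ∀ k : ℕ, (p : ℤ) ^ k ∣ (J k - (K k + m)) := by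
  have hp0 : (p : ℚ) ≠ 0 := by positivity
  obtain ⟨g, hg, hgs⟩ := aux_g p hp J K ξJ ξK hξJ hξK
  constructor
  · rintro ⟨f, hf⟩
    let x : ℕ → pAdicRat p := fun k => ⟨1 / (p : ℚ) ^ k, 1, k, by field_simp; simp⟩
    have hx : ∀ k, IsReducedForm p (x k : ℚ) 1 k := by
      intro k
      refine ⟨by simp [x], Or.inr ?_⟩
      intro hd
      have := Int.le_of_dvd one_pos hd
      omega
    let h : pAdicRat p →+ ℚ := AddMonoidHom.mk' (fun r => (f r : ℚ) - g r) (by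
      intro a b
      have h1 := hf a b
      have h2 := hgs a b
      linarith)
    refine ⟨-f (x 0), fun k => ⟨f (x k), ?_⟩⟩
    have hxk : p ^ k • x k = x 0 := by
      apply Subtype.ext
      simp [x, hp0]
    have e := map_nsmul h (p ^ k) (x k)
    rw [hxk] at e
    have e1 : (f (x 0) : ℚ) - g (x 0) = (p ^ k : ℕ) • ((f (x k) : ℚ) - g (x k)) := e
    rw [hg _ _ _ (hx 0), hg _ _ _ (hx k), hJ.1, hK.1] at e1
    have e2 : ((J k : ℚ) - (K k + -f (x 0))) = p ^ k * f (x k) := by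
      have e3 : ((x k : pAdicRat p) : ℚ) = 1 / (p : ℚ) ^ k := rfl
      rw [e3, nsmul_eq_mul] at e1
      push_cast at e1
      generalize f (x k) = u at *
      generalize f (x 0) = v at *
      field_simp at e1
      linarith
    exact_mod_cast e2
  · rintro ⟨m, hm⟩
    have key : ∀ r : pAdicRat p, ∃ z : ℤ, (z : ℚ) = g r - m * r := by
      intro r
      obtain ⟨q, k, hk⟩ := aux_exists p hp r
      obtain ⟨w, hw⟩ := hm k
      refine ⟨q * w, ?_⟩
      have hw' : (J k : ℚ) - (K k + m) = p ^ k * w := by exact_mod_cast hw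
      have : (J k : ℚ) - K k = p ^ k * w + m := by linarith
      rw [hg r q k hk, this, hk.1]
      push_cast
      field_simp
      ring
    choose f hf using key
    refine ⟨f, fun r s => ?_⟩
    rw [hgs, hf, hf, hf]
    push_cast
    ring
end

section
/- Let p be a natural number with p > 1. Every Schur multiplier ξ of ℤ[1/p] is cohomologous to ξ_J for some sequence of integers J = (J_k)_{k∈ℕ} with J_0 = 0 and J_{k+1} ≡ J_k (mod p^k) for all k. -/
open scoped Real

/-- Extension of `G` by `ℚ` attached to a 2-cocycle. -/
structure CocExt (G : Type) [AddCommGroup G] (ξ : G → G → ℤ) where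
  a : ℚ
  r : G

theorem CocExt.ext' {G : Type} [AddCommGroup G] {ξ : G → G → ℤ} {x y : CocExt G ξ}
    (h1 : x.a = y.a) (h2 : x.r = y.r) : x = y := by
  cases x; cases y; simp_all

section coc
variable {G : Type} [AddCommGroup G] (ξ : G → G → ℤ)

theorem coc_zero_left (hξ : ∀ r s t, ξ r s + ξ (r + s) t = ξ r (s + t) + ξ s t) (r : G) :
    ξ 0 r = ξ 0 0 := by
  have := hξ 0 0 r
  simp only [zero_add] at this
  linarith

theorem coc_exists (hξ : ∀ r s t, ξ r s + ξ (r + s) t = ξ r (s + t) + ξ s t)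
    (hs : ∀ r s, ξ r s = ξ s r) :
    ∃ h : G → ℚ, ∀ r s, (ξ r s : ℚ) = h r + h s - h (r + s) := by
  have h0 := coc_zero_left ξ hξ
  let _ : Add (CocExt G ξ) := ⟨fun x y => ⟨x.a + y.a + ξ x.r y.r, x.r + y.r⟩⟩
  let _ : Zero (CocExt G ξ) := ⟨⟨-ξ 0 0, 0⟩⟩
  let _ : Neg (CocExt G ξ) := ⟨fun x => ⟨-x.a - ξ (-x.r) x.r - ξ 0 0, -x.r⟩⟩
  have adda : ∀ x y : CocExt G ξ, (x + y).a = x.a + y.a + ξ x.r y.r := fun _ _ => rfl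
  have addr : ∀ x y : CocExt G ξ, (x + y).r = x.r + y.r := fun _ _ => rfl
  have za : (0 : CocExt G ξ).a = -ξ 0 0 := rfl
  have zr : (0 : CocExt G ξ).r = 0 := rfl
  have na : ∀ x : CocExt G ξ, (-x).a = -x.a - ξ (-x.r) x.r - ξ 0 0 := fun _ => rfl
  have nr : ∀ x : CocExt G ξ, (-x).r = -x.r := fun _ => rfl
  let _ : AddGroup (CocExt G ξ) := AddGroup.ofLeftAxioms
    (by
      intro x y z
      apply CocExt.ext'
      · simp only [adda, addr]
        have : (ξ x.r y.r : ℚ) + ξ (x.r + y.r) z.r = ξ x.r (y.r + z.r) + ξ y.r z.r := by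
          exact_mod_cast hξ x.r y.r z.r
        linarith
      · simp only [addr, add_assoc])
    (by
      intro x
      apply CocExt.ext'
      · simp only [adda, za, zr, h0]; ring
      · simp only [addr, zr, zero_add])
    (by
      intro x
      apply CocExt.ext'
      · simp only [adda, na, nr, za]; ring
      · simp only [addr, nr, zr, neg_add_cancel])
  let _ : AddCommGroup (CocExt G ξ) := { (inferInstance : AddGroup (CocExt G ξ)) with
    add_comm := by
      intro x y
      apply CocExt.ext'
      · simp only [adda, hs x.r y.r]; ring
      · simp only [addr, add_comm] }
  let ι : ℚ →+ CocExt G ξ := AddMonoidHom.mk' (fun a => ⟨a - ξ 0 0, 0⟩) (by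
    intro a b
    apply CocExt.ext'
    · simp only [adda]; ring
    · simp only [addr, add_zero])
  have hι : Function.Injective ι := by
    intro a b hab
    have : a - (ξ 0 0 : ℚ) = b - ξ 0 0 := congrArg CocExt.a hab
    linarith
  obtain ⟨ρ, hρ⟩ := (Module.Baer.of_divisible ℚ).extension_property_addMonoidHom ι hι
    (AddMonoidHom.id ℚ)
  have hρ' : ∀ a, ρ (ι a) = a := fun a => DFunLike.congr_fun hρ a
  refine ⟨fun r => ρ ⟨0, r⟩, fun r s => ?_⟩
  have e : (⟨0, r⟩ + ⟨0, s⟩ : CocExt G ξ) = ι (ξ r s) + ⟨0, r + s⟩ := by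
    apply CocExt.ext'
    · simp only [adda]
      simp [ι, h0]
    · simp only [addr]
      simp [ι]
  have := congrArg ρ e
  rw [map_add, map_add, hρ'] at this
  linarith

theorem coc_symm (hξ : ∀ r s t, ξ r s + ξ (r + s) t = ξ r (s + t) + ξ s t)
    (hc : ∀ r s : G, ∃ (t : G) (m n : ℤ), r = m • t ∧ s = n • t) (r s : G) :
    ξ r s = ξ s r := by
  have key : ∀ r s t, ξ r (s + t) - ξ (s + t) r = (ξ r s - ξ s r) + (ξ r t - ξ t r) := by
    intro r s t
    have h1 := hξ r s t
    have h2 := hξ s t r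
    have h3 := hξ s r t
    rw [add_comm t r] at h2
    rw [add_comm s r] at h3
    linarith
  let β : G → G →+ ℤ := fun r => AddMonoidHom.mk' (fun s => ξ r s - ξ s r) (key r)
  have hβ : ∀ r s, β r s = ξ r s - ξ s r := fun _ _ => rfl
  obtain ⟨t, m, n, rfl, rfl⟩ := hc r s
  have : β (m • t) (n • t) = 0 := by
    rw [map_zsmul]
    have : β (m • t) t = - β t (m • t) := by rw [hβ, hβ]; ring
    rw [this, map_zsmul, hβ]; simp
  rw [hβ] at this
  linarith

theorem coc_zsmul (h : G → ℚ) (hh : ∀ r s, (ξ r s : ℚ) = h r + h s - h (r + s)) (n : ℤ) (r : G) :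
    ∃ z : ℤ, (z : ℚ) = h (n • r) - n * h r := by
  let φ : G →+ ℚ ⧸ (Int.castAddHom ℚ).range := AddMonoidHom.mk' (fun r => (h r : ℚ ⧸ _)) (by
    intro a b
    rw [← QuotientAddGroup.mk_add, QuotientAddGroup.eq]
    exact ⟨ξ a b, by show (ξ a b : ℚ) = _; rw [hh]; ring⟩)
  have h1 : ((n • h r : ℚ) : ℚ ⧸ (Int.castAddHom ℚ).range) = (h (n • r) : ℚ) :=
    (map_zsmul φ n r).symm
  rw [QuotientAddGroup.eq] at h1
  obtain ⟨z, hz⟩ := h1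
  refine ⟨z, ?_⟩
  change (z : ℚ) = _ at hz
  rw [hz, zsmul_eq_mul]; ring
end coc

theorem red_exists (p : ℕ) (hp : 1 < p) (r : pAdicRat p) :
    ∃ (k : ℕ) (q : ℤ), IsReducedForm p (r : ℚ) q k := by
  classical
  have hp0 : (p : ℚ) ≠ 0 := by positivity
  have hex : ∃ k : ℕ, ∃ z : ℤ, (r : ℚ) * (p : ℚ) ^ k = z := by
    obtain ⟨z, k, h⟩ := r.2
    exact ⟨k, z, h⟩
  obtain ⟨z, hz⟩ := Nat.find_spec hex
  refine ⟨Nat.find hex, z, by rw [← hz]; field_simp, ?_⟩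
  by_contra hcon
  push Not at hcon
  obtain ⟨hk, w, rfl⟩ := hcon
  obtain ⟨j, hj⟩ := Nat.exists_eq_succ_of_ne_zero hk
  apply Nat.find_min hex (m := j) (by omega)
  refine ⟨w, ?_⟩
  rw [hj] at hz
  push_cast [pow_succ] at hz
  apply mul_left_cancel₀ hp0
  rw [← hz]; ring

theorem red_unique_aux (p : ℕ) (hp : 1 < p) (r : ℚ) (q1 q2 : ℤ) (k1 k2 : ℕ)
    (h1 : IsReducedForm p r q1 k1) (h2 : IsReducedForm p r q2 k2) : ¬ k1 < k2 := by
  intro hlt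
  have hp0 : (p : ℚ) ≠ 0 := by positivity
  obtain ⟨d, rfl⟩ := Nat.exists_eq_add_of_lt hlt
  rcases h2.2 with h | h
  · omega
  apply h
  have e := h1.1.symm.trans h2.1
  rw [div_eq_div_iff (by positivity) (by positivity)] at e
  refine ⟨q1 * p ^ d, ?_⟩
  have : (q2 : ℚ) = p * (q1 * p ^ d) := by
    apply mul_right_cancel₀ (pow_ne_zero k1 hp0)
    rw [← e]; ring
  exact_mod_cast this

theorem red_unique (p : ℕ) (hp : 1 < p) (r : ℚ) (q1 q2 : ℤ) (k1 k2 : ℕ)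
    (h1 : IsReducedForm p r q1 k1) (h2 : IsReducedForm p r q2 k2) : k1 = k2 := by
  have := red_unique_aux p hp r q1 q2 k1 k2 h1 h2
  have := red_unique_aux p hp r q2 q1 k2 k1 h2 h1
  omega

theorem red_add (p : ℕ) (hp : 1 < p) (r s : ℚ) (q1 q2 : ℤ) (k1 k2 : ℕ)
    (h1 : IsReducedForm p r q1 k1) (h2 : IsReducedForm p s q2 k2) (hlt : k1 < k2) :
    ∃ q, IsReducedForm p (r + s) q k2 := by
  have hp0 : (p : ℚ) ≠ 0 := by positivity
  obtain ⟨d, rfl⟩ := Nat.exists_eq_add_of_lt hlt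
  refine ⟨p * (q1 * p ^ d) + q2, ?_, Or.inr ?_⟩
  · rw [h1.1, h2.1]
    push_cast
    field_simp
    ring
  · rcases h2.2 with h | h
    · omega
    · rwa [dvd_add_right (dvd_mul_right _ _)]

/-- the element `1/p^k` -/
def invPow (p : ℕ) (hp : 1 < p) (k : ℕ) : pAdicRat p :=
  ⟨1 / (p : ℚ) ^ k, 1, k, by
    have hp0 : (p : ℚ) ≠ 0 := by positivity
    push_cast; field_simp⟩

theorem eq_zsmul_invPow (p : ℕ) (hp : 1 < p) (k : ℕ) (r : pAdicRat p) (q : ℤ)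
    (h : (r : ℚ) = q / (p : ℚ) ^ k) : r = q • invPow p hp k := by
  apply Subtype.ext
  rw [h]
  simp [invPow, div_eq_mul_inv]

/-- For `p > 1`, every Schur multiplier `ξ` of `ℤ[1/p]` (an integer-valued
2-cocycle) is cohomologous to `ξ_J` for some sequence of integers `J` with `J 0 = 0` and
`J (k+1) ≡ J k (mod p^k)` for all `k`. -/
theorem schur_multiplier_cohomologous_xiJ (p : ℕ) (hp : 1 < p)
    (ξ : pAdicRat p → pAdicRat p → ℤ)
    (hξ : ∀ r s t : pAdicRat p, ξ r s + ξ (r + s) t = ξ r (s + t) + ξ s t) :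
    ∃ J : ℕ → ℤ, IsPAdicSeq p J ∧
      ∃ ξJ : pAdicRat p → pAdicRat p → ℚ, XiJFormula p J ξJ ∧
        ∃ f : pAdicRat p → ℤ, ∀ r s : pAdicRat p,
          (ξ r s : ℚ) - ξJ r s = ((f r : ℚ) + f s - f (r + s)) := by
  have hp0 : (p : ℚ) ≠ 0 := by positivity
  have hs := coc_symm ξ hξ (by
    intro r s
    obtain ⟨z1, k1, h1⟩ := r.2
    obtain ⟨z2, k2, h2⟩ := s.2
    refine ⟨invPow p hp (k1 + k2), z1 * p ^ k2, z2 * p ^ k1,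
      eq_zsmul_invPow p hp _ _ _ ?_, eq_zsmul_invPow p hp _ _ _ ?_⟩
    · push_cast
      rw [← h1, pow_add]; field_simp
    · push_cast
      rw [← h2, pow_add]; field_simp)
  obtain ⟨h₀, hh₀⟩ := coc_exists ξ hξ hs
  obtain ⟨h, hh, h1⟩ : ∃ h : pAdicRat p → ℚ,
      (∀ r s, (ξ r s : ℚ) = h r + h s - h (r + s)) ∧ h (invPow p hp 0) = 0 := by
    refine ⟨fun r => h₀ r - r * h₀ (invPow p hp 0), fun r s => ?_, ?_⟩
    · rw [hh₀]; push_cast; ring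
    · simp [invPow]
  have hz := coc_zsmul ξ h hh
  have hJ : ∀ k, ∃ z : ℤ, (z : ℚ) = p ^ k * h (invPow p hp k) := by
    intro k
    obtain ⟨z, hz⟩ := hz ((p : ℤ) ^ k) (invPow p hp k)
    rw [← eq_zsmul_invPow p hp k (invPow p hp 0) _ (by push_cast; simp [invPow, hp0]), h1] at hz
    exact ⟨-z, by push_cast at hz ⊢; rw [hz]; ring⟩
  choose J hJ using hJ
  choose K Q hKQ using red_exists p hp
  have hK : ∀ (r : pAdicRat p) q k, IsReducedForm p (r : ℚ) q k → K r = k := fun r q k hr =>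
    red_unique p hp r _ _ _ _ (hKQ r) hr
  have hf : ∀ r : pAdicRat p, ∃ z : ℤ, (z : ℚ) = h r - r * J (K r) := by
    intro r
    obtain ⟨z, hz⟩ := hz (Q r) (invPow p hp (K r))
    rw [← eq_zsmul_invPow p hp (K r) r _ (hKQ r).1] at hz
    refine ⟨z, ?_⟩
    have : (r : ℚ) * J (K r) = Q r * h (invPow p hp (K r)) := by
      rw [hJ]
      conv_lhs => rw [(hKQ r).1]
      field_simp
    rw [hz, this]
  choose f hf using hf
  refine ⟨J, ⟨?_, fun k => ?_⟩,
    fun r s => r * J (K r) + s * J (K s) - (r + s) * J (K (r + s)), ?_, f, ?_⟩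
  · have := hJ 0
    rw [h1, mul_zero] at this
    exact_mod_cast this
  · obtain ⟨z, hz⟩ := hz p (invPow p hp (k + 1))
    rw [← eq_zsmul_invPow p hp (k + 1) (invPow p hp k) _
      (by push_cast; simp only [invPow]; field_simp; ring)] at hz
    refine ⟨-z, ?_⟩
    have : (J (k + 1) : ℚ) - J k = p ^ k * (-z) := by
      rw [hJ, hJ, hz]; push_cast; ring
    exact_mod_cast this
  · intro r s q1 k1 q2 k2 hr hs
    have er := hK r _ _ hr
    have es := hK s _ _ hs
    refine ⟨fun hlt => ?_, fun hlt => ?_, fun heq q m hm => ?_⟩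
    · obtain ⟨q, hq⟩ := red_add p hp _ _ _ _ _ _ hr hs hlt
      have e := hK (r + s) _ _ hq
      simp only [er, es, e]
      rw [← hr.1]; ring
    · obtain ⟨q, hq⟩ := red_add p hp _ _ _ _ _ _ hs hr hlt
      rw [add_comm] at hq
      have e := hK (r + s) _ _ hq
      simp only [er, es, e]
      rw [← hs.1]; ring
    · have e := hK (r + s) _ _ hm
      simp only [er, es, e]
      rw [← hm.1, heq]; ring
  · intro r s
    rw [hf, hf, hf, hh]
    push_cast
    ring
end

section
/- Let p be a prime number. The abelian group Ext¹_ℤ(ℤ[1/p], ℤ), i.e. the first Ext group of ℤ[1/p] by ℤ in the category of abelian groups (ℤ-modules), is isomorphic to the quotient group ℤ_p/ℤ, where ℤ_p is the additive group of p-adic integers and ℤ is embedded in ℤ_p via the canonical ring homomorphism. -/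
open scoped Real

section PadicPart

variable {p : ℕ} [Fact p.Prime]

theorem psum_summable (a : ℕ → ℤ) : Summable (fun n => (a n : ℤ_[p]) * (p : ℤ_[p]) ^ n) := by
  apply Summable.of_norm_bounded (g := fun n => (‖(p : ℤ_[p])‖) ^ n)
  · apply summable_geometric_of_lt_one (norm_nonneg _)
    rw [PadicInt.norm_p]
    exact inv_lt_one_of_one_lt₀ (by exact_mod_cast (Fact.out : p.Prime).one_lt)
  · intro n
    rw [norm_mul, norm_pow]
    exact mul_le_of_le_one_left (by positivity) (PadicInt.norm_le_one _)

/-- The sum of a formal power series at `p`. -/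
noncomputable def psum (p : ℕ) [Fact p.Prime] (a : ℕ → ℤ) : ℤ_[p] :=
  ∑' n, (a n : ℤ_[p]) * (p : ℤ_[p]) ^ n

theorem psum_add (a b : ℕ → ℤ) : psum p (a + b) = psum p a + psum p b := by
  unfold psum
  rw [← (psum_summable a).tsum_add (psum_summable b)]
  congr 1; ext n; simp [add_mul]

theorem psum_shift (a : ℕ → ℤ) : psum p a = a 0 + p * psum p (fun n => a (n + 1)) := by
  unfold psum
  rw [(psum_summable a).tsum_eq_zero_add, ← (psum_summable _).tsum_mul_left]
  congr 1
  · simp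
  · congr 1; ext n; rw [pow_succ]; ring

theorem padic_eq_zero_of_dvd (y : ℤ_[p]) (h : ∀ n : ℕ, (p : ℤ_[p]) ^ n ∣ y) : y = 0 := by
  by_contra hy
  have h1 := h (y.valuation + 1)
  rw [← Ideal.mem_span_singleton, PadicInt.mem_span_pow_iff_le_valuation y hy] at h1
  omega

theorem psum_unique (a : ℕ → ℤ) (x : ℕ → ℤ_[p]) (h : ∀ n, x n = a n + p * x (n + 1)) :
    x 0 = psum p a := by
  rw [← sub_eq_zero]
  apply padic_eq_zero_of_dvd
  suffices H : ∀ n k, (p : ℤ_[p]) ^ n ∣ x k - psum p (fun i => a (k + i)) by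
    intro n; simpa using H n 0
  intro n
  induction n with
  | zero => simp
  | succ n ih =>
    intro k
    have h1 := psum_shift (p := p) (fun i => a (k + i))
    obtain ⟨c, hc⟩ := ih (k + 1)
    refine ⟨c, ?_⟩
    rw [h1, h k]
    have h2 : (fun i => a (k + (i + 1))) = fun i => a (k + 1 + i) := by
      ext i; congr 1; ring
    simp only [h2, add_zero]
    rw [pow_succ]
    linear_combination (p : ℤ_[p]) * hc

theorem psum_surj (x : ℤ_[p]) : ∃ a : ℕ → ℤ, psum p a = x := by
  have h : ∀ x : ℤ_[p], ∃ y : ℤ_[p], x - x.zmodRepr = p * y := by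
    intro x
    exact (PadicInt.norm_lt_one_iff_dvd _).1 (PadicInt.norm_sub_zmodRepr_lt_one x)
  choose f hf using h
  refine ⟨fun n => ((f^[n] x).zmodRepr : ℤ), ?_⟩
  symm
  refine psum_unique _ (fun n => f^[n] x) ?_
  intro n
  rw [Function.iterate_succ_apply']
  push_cast
  linear_combination hf (f^[n] x)

theorem psum_int_iff (a : ℕ → ℤ) :
    (∃ m : ℤ, (m : ℤ_[p]) = psum p a) ↔ ∃ b : ℕ → ℤ, ∀ n, a n = b n - p * b (n + 1) := by
  have hp : (p : ℤ_[p]) ≠ 0 := by exact_mod_cast (Fact.out : p.Prime).ne_zero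
  constructor
  · rintro ⟨m, hm⟩
    have key : ∀ k, psum p (fun i => a (k + i)) = a k + p * psum p (fun i => a (k + 1 + i)) := by
      intro k
      rw [psum_shift]
      have h2 : (fun i => a (k + (i + 1))) = fun i => a (k + 1 + i) := by
        ext i; congr 1; ring
      simp only [h2, add_zero]
    have H : ∀ k, ∃ b : ℤ, (b : ℤ_[p]) = psum p (fun i => a (k + i)) := by
      intro k
      induction k with
      | zero => exact ⟨m, by simpa using hm⟩
      | succ k ih =>
        obtain ⟨b, hb⟩ := ih
        rw [key] at hb
        have hd : (p : ℤ_[p]) ^ 1 ∣ ((b - a k : ℤ) : ℤ_[p]) := by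
          refine ⟨psum p (fun i => a (k + 1 + i)), ?_⟩
          push_cast; rw [hb]; ring
        rw [PadicInt.pow_p_dvd_int_iff] at hd
        obtain ⟨c, hc⟩ := hd
        refine ⟨c, mul_left_cancel₀ hp ?_⟩
        have hc' : (b : ℤ_[p]) - a k = p * c := by
          have := congrArg (Int.cast : ℤ → ℤ_[p]) hc
          push_cast at this
          simpa using this
        linear_combination hb - hc'
    choose b hb using H
    refine ⟨b, fun n => ?_⟩
    have := key n
    rw [← hb, ← hb] at this
    have h3 : b n = a n + p * b (n + 1) := by exact_mod_cast this
    linarith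
  · rintro ⟨b, hb⟩
    refine ⟨b 0, psum_unique a (fun n => (b n : ℤ_[p])) fun n => ?_⟩
    rw [hb n]; push_cast; ring

end PadicPart
section FinsuppPart

set_option linter.unusedSectionVars false

variable (p : ℕ) [Fact p.Prime]

/-- The differential `e_n ↦ e_n - p e_{n+1}`. -/
noncomputable def resD : (ℕ →₀ ℤ) →ₗ[ℤ] (ℕ →₀ ℤ) :=
  Finsupp.lsum ℤ fun n => LinearMap.toSpanSingleton ℤ _
    (Finsupp.single n (1 : ℤ) - Finsupp.single (n + 1) (p : ℤ))

theorem resD_single (n : ℕ) (m : ℤ) :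
    resD p (Finsupp.single n m) = Finsupp.single n m - Finsupp.single (n + 1) (p * m) := by
  simp [resD, smul_sub, mul_comm]

/-- The element `1/p^n`. -/
noncomputable def pinv (n : ℕ) : pAdicRat p :=
  ⟨1 / (p : ℚ) ^ n, 1, n, by
    have : (p : ℚ) ≠ 0 := by exact_mod_cast (Fact.out : p.Prime).ne_zero
    field_simp; simp⟩

/-- The augmentation `e_n ↦ 1/p^n`. -/
noncomputable def resE : (ℕ →₀ ℤ) →ₗ[ℤ] pAdicRat p :=
  Finsupp.lsum ℤ fun n => LinearMap.toSpanSingleton ℤ _ (pinv p n)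

theorem resE_single (n : ℕ) (m : ℤ) :
    (resE p (Finsupp.single n m) : ℚ) = m / (p : ℚ) ^ n := by
  simp [resE, pinv, div_eq_mul_inv]

theorem resE_resD (c : ℕ →₀ ℤ) : resE p (resD p c) = 0 := by
  have hp : (p : ℚ) ≠ 0 := by exact_mod_cast (Fact.out : p.Prime).ne_zero
  have : resE p ∘ₗ resD p = 0 := by
    refine Finsupp.lhom_ext fun n m => ?_
    rw [LinearMap.comp_apply, resD_single, map_sub]
    apply Subtype.ext
    rw [AddSubgroup.coe_sub, resE_single, resE_single]
    simp only [LinearMap.zero_apply, AddSubgroup.coe_zero]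
    push_cast
    field_simp
    ring
  exact LinearMap.congr_fun this c

theorem resE_surj : Function.Surjective (resE p) := by
  have hp : (p : ℚ) ≠ 0 := by exact_mod_cast (Fact.out : p.Prime).ne_zero
  rintro ⟨r, z, k, h⟩
  refine ⟨Finsupp.single k z, Subtype.ext ?_⟩
  rw [resE_single]
  have h' : (z : ℚ) / (p : ℚ) ^ k = r := by
    rw [← h]; field_simp
  exact h'

theorem resD_apply_zero (c : ℕ →₀ ℤ) : resD p c 0 = c 0 := by
  induction c using Finsupp.induction_linear with
  | zero => simp
  | add f g hf hg => simp [hf, hg]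
  | single n m => rw [resD_single]; simp

theorem resD_apply_succ (c : ℕ →₀ ℤ) (n : ℕ) : resD p c (n + 1) = c (n + 1) - p * c n := by
  induction c using Finsupp.induction_linear with
  | zero => simp
  | add f g hf hg => simp [hf, hg]; ring
  | single k m =>
    rw [resD_single]
    simp [Finsupp.single_apply]
    intro h1 h2; exact absurd h2 h1

theorem resD_inj : Function.Injective (resD p) := by
  rw [injective_iff_map_eq_zero]
  intro c hc
  ext n
  induction n with
  | zero => rw [← resD_apply_zero p, hc]
  | succ n ih =>
    have := resD_apply_succ p c n
    rw [hc, ih] at this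
    simpa using this.symm

theorem single_mod (N : ℕ) (m : ℤ) (k : ℕ) :
    ∃ d, Finsupp.single N m = resD p d + Finsupp.single (N + k) ((p : ℤ) ^ k * m) := by
  induction k with
  | zero => exact ⟨0, by simp⟩
  | succ k ih =>
    obtain ⟨d, hd⟩ := ih
    refine ⟨d + Finsupp.single (N + k) ((p : ℤ) ^ k * m), ?_⟩
    rw [hd, map_add, resD_single, ← add_assoc N k 1, pow_succ' (p : ℤ) k, mul_assoc]
    abel

theorem finsupp_mod (c : ℕ →₀ ℤ) : ∃ d N m, c = resD p d + Finsupp.single N m := by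
  induction c using Finsupp.induction_linear with
  | zero => exact ⟨0, 0, 0, by simp⟩
  | add f g hf hg =>
    obtain ⟨d, N, m, hf⟩ := hf
    obtain ⟨d', N', m', hg⟩ := hg
    obtain ⟨u, hu⟩ := single_mod p N m N'
    obtain ⟨v, hv⟩ := single_mod p N' m' N
    refine ⟨d + d' + u + v, N + N', (p : ℤ) ^ N' * m + (p : ℤ) ^ N * m', ?_⟩
    rw [hf, hg, hu, hv, add_comm N' N]
    simp only [map_add, Finsupp.single_add]
    abel
  | single n m => exact ⟨0, n, m, by simp⟩

theorem res_exact (c : ℕ →₀ ℤ) (hc : resE p c = 0) : ∃ d, resD p d = c := by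
  have hp : (p : ℚ) ≠ 0 := by exact_mod_cast (Fact.out : p.Prime).ne_zero
  obtain ⟨d, N, m, h⟩ := finsupp_mod p c
  refine ⟨d, ?_⟩
  rw [h, map_add, resE_resD, zero_add] at hc
  have h1 := congrArg (Subtype.val) hc
  rw [resE_single] at h1
  have hm : m = 0 := by
    have : (m : ℚ) = 0 := by simpa [hp] using h1
    exact_mod_cast this
  rw [h, hm]; simp

end FinsuppPart
section HomologyPart

open CategoryTheory Limits

theorem homology_equiv_of_surj (S : ShortComplex (ModuleCat.{0} ℤ)) (hg : S.g = 0)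
    {A : Type} [AddCommGroup A] (ψ : S.X₂ →ₗ[ℤ] A) (hs : Function.Surjective ψ)
    (hk : ∀ x, ψ x = 0 ↔ ∃ y, S.f.hom y = x) : Nonempty (S.homology ≃+ A) := by
  have hk' : LinearMap.range S.f.hom = LinearMap.ker ψ := by
    ext x; rw [LinearMap.mem_ker, hk]; rfl
  have e1 : S.homology ≅ S.opcycles := S.asIsoHomologyι hg
  have e2 := (e1 ≪≫ S.moduleCatOpcyclesIso).toLinearEquiv
  exact ⟨(e2.trans ((Submodule.quotEquivOfEq _ _ hk').trans
    (ψ.quotKerEquivOfSurjective hs))).toAddEquiv⟩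

set_option linter.unusedSectionVars false

variable (p : ℕ) [Fact p.Prime]

/-- The two-term complex. -/
noncomputable def resC : ChainComplex (ModuleCat.{0} ℤ) ℕ :=
  ChainComplex.augment ((ChainComplex.single₀ _).obj (ModuleCat.of ℤ (ℕ →₀ ℤ)))
    (X := ModuleCat.of ℤ (ℕ →₀ ℤ)) (ModuleCat.ofHom (resD p)) (by
      rw [HomologicalComplex.single_obj_d]; exact zero_comp)

theorem resC_d : (resC p).d 1 0 = ModuleCat.ofHom (resD p) := rfl

theorem resC_isZero (n : ℕ) : IsZero ((resC p).X (n + 2)) := by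
  exact HomologicalComplex.isZero_single_obj_X (ComplexShape.down ℕ) 0 (ModuleCat.of ℤ (ℕ →₀ ℤ)) (n + 1) (by simp)

theorem resC_proj (n : ℕ) : Projective ((resC p).X n) := by
  match n with
  | 0 => exact ModuleCat.projective_of_free (M := ModuleCat.of ℤ (ℕ →₀ ℤ)) Finsupp.basisSingleOne
  | 1 => exact ModuleCat.projective_of_free (M := ModuleCat.of ℤ (ℕ →₀ ℤ)) Finsupp.basisSingleOne
  | n + 2 => exact (resC_isZero p n).projective

theorem resC_zero : (resC p).d 1 0 ≫ ModuleCat.ofHom (resE p) = 0 := by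
  rw [resC_d]
  exact ModuleCat.hom_ext (LinearMap.ext fun c => resE_resD p c)

/-- The augmentation. -/
noncomputable def resPi :
    resC p ⟶ (ChainComplex.single₀ _).obj (ModuleCat.of ℤ (pAdicRat p)) :=
  (ChainComplex.toSingle₀Equiv _ _).symm ⟨ModuleCat.ofHom (resE p), resC_zero p⟩

theorem resC_exactAt (n : ℕ) : (resC p).ExactAt (n + 1) := by
  rw [HomologicalComplex.exactAt_iff' _ (n + 1 + 1) (n + 1) n (by simp) (by simp)]
  match n with
  | 0 =>
    rw [ShortComplex.moduleCat_exact_iff]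
    intro x hx
    refine ⟨0, ?_⟩
    rw [map_zero]
    exact (resD_inj p (hx.trans (map_zero (resD p)).symm)).symm
  | n + 1 => exact ShortComplex.exact_of_isZero_X₂ _ (resC_isZero p n)

theorem resPi_quasiIso : QuasiIso (resPi p) := ⟨fun n => by
  cases n with
  | zero =>
    rw [ChainComplex.quasiIsoAt₀_iff, ShortComplex.quasiIso_iff_of_zeros']
    · constructor
      · rw [ShortComplex.moduleCat_exact_iff]
        intro x hx
        exact res_exact p x hx
      · rw [ModuleCat.epi_iff_surjective]
        exact resE_surj p
    all_goals rfl
  | succ n =>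
    rw [quasiIsoAt_iff_exactAt']
    · exact resC_exactAt p n
    · apply ChainComplex.exactAt_succ_single_obj⟩

/-- The projective resolution. -/
noncomputable def resP : ProjectiveResolution (ModuleCat.of ℤ (pAdicRat p)) :=
  ProjectiveResolution.mk (resC p) (resC_proj p) (resPi p) (resPi_quasiIso p)

/-- The map to `ℤ_p/ℤ`. -/
noncomputable def toQuot : ((ℕ →₀ ℤ) →ₗ[ℤ] ℤ) →+ (ℤ_[p] ⧸ (Int.castAddHom ℤ_[p]).range) where
  toFun φ := QuotientAddGroup.mk (psum p fun n => φ (Finsupp.single n 1))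
  map_zero' := by
    rw [QuotientAddGroup.eq_zero_iff]
    exact ⟨0, by simp [psum]⟩
  map_add' φ ψ := by
    rw [← QuotientAddGroup.mk_add, ← psum_add]
    rfl

theorem toQuot_surj : Function.Surjective (toQuot p) := by
  intro x
  obtain ⟨x, rfl⟩ := QuotientAddGroup.mk_surjective x
  obtain ⟨a, rfl⟩ := psum_surj x
  refine ⟨Finsupp.lsum ℤ fun n => LinearMap.toSpanSingleton ℤ _ (a n), ?_⟩
  simp [toQuot]

theorem toQuot_ker (φ : (ℕ →₀ ℤ) →ₗ[ℤ] ℤ) :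
    toQuot p φ = 0 ↔ ∃ g : (ℕ →₀ ℤ) →ₗ[ℤ] ℤ, g ∘ₗ resD p = φ := by
  have h0 : toQuot p φ = 0 ↔
      ∃ m : ℤ, (m : ℤ_[p]) = psum p fun n => φ (Finsupp.single n 1) :=
    QuotientAddGroup.eq_zero_iff _
  rw [h0, psum_int_iff]
  constructor
  · rintro ⟨b, hb⟩
    refine ⟨Finsupp.lsum ℤ fun n => LinearMap.toSpanSingleton ℤ _ (b n), ?_⟩
    ext n
    simp only [LinearMap.comp_apply, Finsupp.lsingle_apply, resD_single, hb, map_sub]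
    simp
  · rintro ⟨g, rfl⟩
    refine ⟨fun n => g (Finsupp.single n 1), fun n => ?_⟩
    have : Finsupp.single (n + 1) ((p : ℤ) * 1) = (p : ℤ) • Finsupp.single (n + 1) (1 : ℤ) := by
      simp
    rw [LinearMap.comp_apply, resD_single, map_sub, this, map_smul, smul_eq_mul]

end HomologyPart

open CategoryTheory

/-- For `p` prime, the abelian group `Ext¹_ℤ(ℤ[1/p], ℤ)` is isomorphic to
`ℤ_p/ℤ`, the additive group of `p`-adic integers modulo the canonically embedded copy of
the integers. -/
theorem ext_pAdicRat_int (p : ℕ) [Fact p.Prime] :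
    Nonempty
      ((((Ext ℤ (ModuleCat ℤ) 1).obj
          (Opposite.op (ModuleCat.of ℤ (pAdicRat p)))).obj (ModuleCat.of ℤ ℤ)) ≃+
        (ℤ_[p] ⧸ (Int.castAddHom ℤ_[p]).range)) := by
  let K := (resP p).complex.linearYonedaObj ℤ (ModuleCat.of ℤ ℤ)
  let e1 := ((resP p).isoExt (R := ℤ) 1 (ModuleCat.of ℤ ℤ)) ≪≫
    K.homologyIsoSc' 0 1 2 (by simp) (by simp)
  let ψ : (K.sc' 0 1 2).X₂ →+ (ℤ_[p] ⧸ (Int.castAddHom ℤ_[p]).range) :=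
    (toQuot p).comp ((ModuleCat.homAddEquiv (M := ModuleCat.of ℤ (ℕ →₀ ℤ))
      (N := ModuleCat.of ℤ ℤ)).toAddMonoidHom)
  obtain ⟨e2⟩ := homology_equiv_of_surj (K.sc' 0 1 2) (by
      ext x
      exact (resC_isZero p 0).eq_of_src _ _) ψ.toIntLinearMap
    ((toQuot_surj p).comp (ModuleCat.homAddEquiv (M := ModuleCat.of ℤ (ℕ →₀ ℤ))
      (N := ModuleCat.of ℤ ℤ)).surjective) (by
      intro x
      refine (toQuot_ker p _).trans ?_
      constructor
      · rintro ⟨g, hg⟩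
        exact ⟨ModuleCat.ofHom g, ModuleCat.hom_ext hg⟩
      · rintro ⟨g, hg⟩
        exact ⟨ModuleCat.Hom.hom g, congrArg ModuleCat.Hom.hom hg⟩)
  exact ⟨e1.toLinearEquiv.toAddEquiv.trans e2⟩
end

section
/- Let p be a natural number with p > 1 and let α ∈ Ξ_p. For each k ∈ ℕ set J_k = p^k·α_k − α_0. Then J_k is an integer for every k, J_0 = 0, and J_{k+1} ≡ J_k (mod p^k) for all k ∈ ℕ (so J = (J_k) defines a p-adic integer). -/
/-- For `p > 1` and `α ∈ Ξ_p`, setting `J_k = p^k α_k - α_0`, each `J_k` is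
an integer, `J_0 = 0`, and `J_{k+1} ≡ J_k (mod p^k)` for all `k`, so `J` defines a
`p`-adic integer. -/
theorem xi_gives_padic_integer (p : ℕ) (hp : 1 < p) (α : ℕ → ℝ) (hα : XiSeq p α) :
    ∃ J : ℕ → ℤ,
      (∀ k : ℕ, (J k : ℝ) = (p : ℝ) ^ k * α k - α 0) ∧
      J 0 = 0 ∧
      ∀ k : ℕ, (p : ℤ) ^ k ∣ (J (k + 1) - J k) := by
  obtain ⟨_, h⟩ := hα
  choose j _ hj using h
  refine ⟨fun k => ∑ i ∈ Finset.range k, (p : ℤ) ^ i * (j i : ℤ), ?_, by simp, ?_⟩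
  · intro k
    induction k with
    | zero => simp
    | succ n ih =>
      simp only [Finset.sum_range_succ, Int.cast_add] at ih ⊢
      rw [ih]
      push_cast
      rw [← hj n]
      ring
  · intro k
    simp [Finset.sum_range_succ]
end

section
/- Let p be a natural number with p > 1 and let α : ℕ → ℝ be a sequence such that p·α_{n+1} − α_n ∈ ℤ for all n ∈ ℕ. Then the additive subgroup of ℝ generated by the set {1} ∪ {α_k : k ∈ ℕ} equals {z + y·α_k : z, y ∈ ℤ, k ∈ ℕ}. -/
theorem trace_aux (p : ℕ) (α : ℕ → ℝ)
    (hα : ∀ n : ℕ, ∃ m : ℤ, (p : ℝ) * α (n + 1) - α n = m) (k d : ℕ) :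
    ∃ z y : ℤ, α k = z + y * α (k + d) := by
  induction d with
  | zero => exact ⟨0, 1, by simp⟩
  | succ d ih =>
    obtain ⟨z, y, h⟩ := ih
    obtain ⟨m, hm⟩ := hα (k + d)
    refine ⟨z - y * m, y * p, ?_⟩
    rw [h, ← add_assoc]
    push_cast
    rw [← hm]
    ring

/-- Let `p > 1` and let `α : ℕ → ℝ` satisfy `p α_{n+1} - α_n ∈ ℤ` for all
`n`. Then the additive subgroup of `ℝ` generated by `{1} ∪ {α_k : k ∈ ℕ}` is exactly
`{z + y α_k : z, y ∈ ℤ, k ∈ ℕ}`. -/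
theorem trace_range_description (p : ℕ) (hp : 1 < p) (α : ℕ → ℝ)
    (hα : ∀ n : ℕ, ∃ m : ℤ, (p : ℝ) * α (n + 1) - α n = m) :
    ∀ x : ℝ, x ∈ AddSubgroup.closure ({1} ∪ Set.range α) ↔
      ∃ (z y : ℤ) (k : ℕ), x = z + y * α k := by
  intro x
  constructor
  · intro hx
    induction hx using AddSubgroup.closure_induction with
    | mem x hx =>
      rcases hx with hx | ⟨k, rfl⟩
      · rw [Set.mem_singleton_iff] at hx
        exact ⟨1, 0, 0, by simp [hx]⟩
      · exact ⟨0, 1, k, by simp⟩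
    | zero => exact ⟨0, 0, 0, by simp⟩
    | add a b _ _ ha hb =>
      obtain ⟨z, y, k, rfl⟩ := ha
      obtain ⟨z', y', l, rfl⟩ := hb
      obtain ⟨u, v, h⟩ := trace_aux p α hα k l
      obtain ⟨u', v', h'⟩ := trace_aux p α hα l k
      rw [add_comm l k] at h'
      refine ⟨z + z' + y * u + y' * u', y * v + y' * v', k + l, ?_⟩
      rw [h, h']
      push_cast
      ring
    | neg a _ ha =>
      obtain ⟨z, y, k, rfl⟩ := ha
      exact ⟨-z, -y, k, by push_cast; ring⟩
  · rintro ⟨z, y, k, rfl⟩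
    have h1 : (1 : ℝ) ∈ AddSubgroup.closure ({1} ∪ Set.range α) :=
      AddSubgroup.subset_closure (Or.inl rfl)
    have h2 : α k ∈ AddSubgroup.closure ({1} ∪ Set.range α) :=
      AddSubgroup.subset_closure (Or.inr ⟨k, rfl⟩)
    have := add_mem (zsmul_mem h1 z) (zsmul_mem h2 y)
    simpa only [zsmul_eq_mul, mul_one] using this
end

section
/- Let p be a prime number and let ι : ℤ[1/p] → ℚ_p × ℝ be defined by ι(r) = (r, −r), using the canonical embeddings of ℤ[1/p] into ℚ_p and into ℝ. Then ι is an injective group homomorphism, its image ι(ℤ[1/p]) is a discrete subgroup of the topological group ℚ_p × ℝ, and the quotient topological group (ℚ_p × ℝ)/ι(ℤ[1/p]) is isomorphic, as a topological group, to the p-solenoid 𝕊_p; in particular ι(ℤ[1/p]) is cocompact. -/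
open scoped Real

/-- `e t = exp (2 π i t)`. -/
noncomputable def solE (t : ℝ) : Circle := Circle.exp (2 * π * t)

lemma solE_add (s t : ℝ) : solE (s + t) = solE s * solE t := by
  simp [solE, mul_add, Circle.exp_add]

lemma solE_int (n : ℤ) : solE n = 1 := Circle.exp_two_pi_mul_int n

lemma solE_eq_one {t : ℝ} (h : solE t = 1) : ∃ n : ℤ, t = n := by
  obtain ⟨n, hn⟩ := Circle.exp_eq_one.1 h
  refine ⟨n, ?_⟩
  have : (2 * π) ≠ 0 := by positivity
  apply mul_left_cancel₀ this
  rw [hn]; ring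

lemma solE_pow (t : ℝ) (n : ℕ) : solE t ^ n = solE (n * t) := by
  unfold solE
  rw [← Circle.exp_natCast_mul]
  congr 1; ring

lemma solE_continuous : Continuous solE :=
  Circle.exp.continuous.comp (continuous_const_mul _)

lemma solE_surj (z : Circle) : ∃ t, solE t = z := by
  obtain ⟨s, hs⟩ := Circle.exp_surjective z
  refine ⟨s / (2 * π), ?_⟩
  rw [← hs, solE]
  congr 1
  field_simp

section
variable {p : ℕ} [hp : Fact p.Prime]

lemma sol_p_ne : (p : ℚ) ≠ 0 := Nat.cast_ne_zero.2 hp.out.ne_zero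

lemma pAdicRat_int {r : ℚ} (hr : r ∈ pAdicRat p) (h : ‖(r : ℚ_[p])‖ ≤ 1) : ∃ z : ℤ, r = z := by
  obtain ⟨z, k, hz⟩ := hr
  have h1 : (z : ℚ_[p]) = (r : ℚ_[p]) * (p : ℚ_[p]) ^ k := by
    have := congrArg (fun q : ℚ => (q : ℚ_[p])) hz
    push_cast at this
    exact this.symm
  have h2 : ‖(z : ℚ_[p])‖ ≤ (p : ℝ) ^ (-k : ℤ) := by
    rw [h1, norm_mul, Padic.norm_p_pow]
    have : (0 : ℝ) ≤ (p : ℝ) ^ (-k : ℤ) := by positivity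
    nlinarith
  rw [Padic.norm_int_le_pow_iff_dvd] at h2
  obtain ⟨w, hw⟩ := h2
  refine ⟨w, ?_⟩
  have : (p : ℚ) ^ k ≠ 0 := pow_ne_zero _ sol_p_ne
  apply mul_right_cancel₀ this
  rw [hz, hw]; push_cast; ring

lemma pAdicRat_mk (z : ℤ) (k : ℕ) : (z : ℚ) / (p : ℚ) ^ k ∈ pAdicRat p :=
  ⟨z, k, div_mul_cancel₀ _ (pow_ne_zero _ sol_p_ne)⟩

lemma pAdicRat_div {r : ℚ} (hr : r ∈ pAdicRat p) (n : ℕ) : r / (p : ℚ) ^ n ∈ pAdicRat p := by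
  obtain ⟨z, k, hz⟩ := hr
  refine ⟨z, n + k, ?_⟩
  have : (p : ℚ) ^ n ≠ 0 := pow_ne_zero _ sol_p_ne
  rw [← hz, pow_add]; field_simp

lemma pAdicRat_rep (x : ℚ_[p]) : ∃ r ∈ pAdicRat p, ‖x - (r : ℚ_[p])‖ ≤ 1 := by
  have hp1 : (1 : ℝ) < p := by exact_mod_cast hp.out.one_lt
  have hpp : (p : ℚ_[p]) ≠ 0 := by exact_mod_cast hp.out.ne_zero
  obtain ⟨k, hk⟩ := pow_unbounded_of_one_lt ‖x‖ hp1
  have hpk : (0 : ℝ) < (p : ℝ) ^ k := by positivity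
  have hx : ‖x * (p : ℚ_[p]) ^ k‖ ≤ 1 := by
    rw [norm_mul, Padic.norm_p_pow, zpow_neg, zpow_natCast, ← div_eq_mul_inv, div_le_one hpk]
    exact hk.le
  set y : ℤ_[p] := ⟨_, hx⟩ with hy
  have h1 := (PadicInt.norm_le_pow_iff_mem_span_pow _ _).2 (PadicInt.appr_spec k y)
  refine ⟨_, pAdicRat_mk (y.appr k : ℤ) k, ?_⟩
  have h2 : x - (((((y.appr k : ℤ) : ℚ) / (p : ℚ) ^ k : ℚ)) : ℚ_[p])
      = ((y - (y.appr k : ℤ_[p]) : ℤ_[p]) : ℚ_[p]) / (p : ℚ_[p]) ^ k := by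
    push_cast
    rw [hy]
    field_simp
  rw [h2, norm_div, Padic.norm_p_pow, PadicInt.padic_norm_e_of_padicInt]
  apply div_le_one_of_le₀ h1 (by positivity)

/-- The standard character of `ℚ_p`. -/
noncomputable def solChi (x : ℚ_[p]) : Circle := solE ((pAdicRat_rep x).choose : ℚ)

lemma solChi_eq {x : ℚ_[p]} {r : ℚ} (hr : r ∈ pAdicRat p) (h : ‖x - (r : ℚ_[p])‖ ≤ 1) :
    solChi x = solE (r : ℝ) := by
  obtain ⟨h1, h2⟩ := (pAdicRat_rep x).choose_spec
  unfold solChi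
  set s := (pAdicRat_rep x).choose
  obtain ⟨z, hz⟩ := pAdicRat_int (p := p) (r := s - r) ((pAdicRat p).sub_mem h1 hr) (by
    have : (((s - r : ℚ)) : ℚ_[p]) = (x - (r : ℚ_[p])) + -(x - (s : ℚ_[p])) := by push_cast; ring
    rw [this]
    exact (Padic.nonarchimedean _ _).trans (max_le h (by rwa [norm_neg])))
  have : (s : ℝ) = r + z := by
    have : s = r + z := by rw [← hz]; ring
    rw [this]; push_cast; rfl
  rw [this, solE_add, solE_int, mul_one]

lemma solChi_add (x y : ℚ_[p]) : solChi (x + y) = solChi x * solChi y := by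
  obtain ⟨r, hr, h⟩ := pAdicRat_rep x
  obtain ⟨s, hs, h'⟩ := pAdicRat_rep y
  rw [solChi_eq hr h, solChi_eq hs h', ← solE_add, solChi_eq ((pAdicRat p).add_mem hr hs)]
  · push_cast; rfl
  · have : x + y - ((r + s : ℚ) : ℚ_[p]) = (x - r) + (y - s) := by push_cast; ring
    rw [this]
    exact (Padic.nonarchimedean _ _).trans (max_le h h')

lemma solChi_rat {r : ℚ} (hr : r ∈ pAdicRat p) : solChi (r : ℚ_[p]) = solE (r : ℝ) :=
  solChi_eq hr (by simp)

lemma solChi_eq_one {x : ℚ_[p]} (h : solChi x = 1) : ‖x‖ ≤ 1 := by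
  obtain ⟨r, hr, h'⟩ := pAdicRat_rep x
  rw [solChi_eq hr h'] at h
  obtain ⟨n, hn⟩ := solE_eq_one h
  have hn' : r = n := by exact_mod_cast hn
  subst hn'
  have : x = (x - ((n : ℚ) : ℚ_[p])) + (n : ℚ_[p]) := by push_cast; ring
  rw [this]
  exact (Padic.nonarchimedean _ _).trans (max_le h' (Padic.norm_int_le_one n))

lemma solChi_of_norm {x : ℚ_[p]} (h : ‖x‖ ≤ 1) : solChi x = 1 := by
  rw [solChi_eq (r := 0) (pAdicRat p).zero_mem (by simpa using h)]
  simpa using solE_int 0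

lemma solChi_pow (x : ℚ_[p]) (n : ℕ) : solChi x ^ n = solChi ((n : ℚ_[p]) * x) := by
  induction n with
  | zero => simp [solChi_of_norm]
  | succ n ih => rw [pow_succ, ih, ← solChi_add]; congr 1; push_cast; ring

lemma solChi_continuous : Continuous (solChi (p := p)) := by
  apply IsLocallyConstant.continuous
  rw [IsLocallyConstant.iff_eventually_eq]
  intro x
  filter_upwards [Metric.ball_mem_nhds x one_pos] with y hy
  have : y = (y - x) + x := by ring
  rw [this, solChi_add, solChi_of_norm, one_mul]
  rw [Metric.mem_ball, dist_eq_norm] at hy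
  exact hy.le

/-- Coordinates of the map to the solenoid. -/
noncomputable def solF (n : ℕ) (a : ℚ_[p] × ℝ) : Circle :=
  solChi (a.1 / (p : ℚ_[p]) ^ n) * solE (a.2 / (p : ℝ) ^ n)

lemma solF_continuous (n : ℕ) : Continuous (solF (p := p) n) :=
  (solChi_continuous.comp (continuous_fst.div_const _)).mul
    (solE_continuous.comp (continuous_snd.div_const _))

lemma solF_add (n : ℕ) (a b : ℚ_[p] × ℝ) : solF n (a + b) = solF n a * solF n b := by
  simp only [solF, Prod.fst_add, Prod.snd_add, add_div, solChi_add, solE_add]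
  exact mul_mul_mul_comm _ _ _ _

lemma solF_pow (n : ℕ) (a : ℚ_[p] × ℝ) : solF (n + 1) a ^ p = solF n a := by
  have h1 : (p : ℚ_[p]) ≠ 0 := by exact_mod_cast hp.out.ne_zero
  have h2 : (p : ℝ) ≠ 0 := by exact_mod_cast hp.out.ne_zero
  simp only [solF, mul_pow, solChi_pow, solE_pow]
  congr 2 <;> (rw [pow_succ]; field_simp)

lemma solF_iota (n : ℕ) {r : ℚ} (hr : r ∈ pAdicRat p) :
    solF n ((r : ℚ_[p]), -(r : ℝ)) = 1 := by
  have h := solChi_rat (pAdicRat_div hr n)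
  push_cast at h
  simp only [solF, h]
  rw [← solE_add]
  have : (r : ℝ) / (p : ℝ) ^ n + -(r : ℝ) / (p : ℝ) ^ n = ((0 : ℤ) : ℝ) := by push_cast; ring
  rw [this, solE_int]

lemma solF_ker {a : ℚ_[p] × ℝ} (h : ∀ n, solF n a = 1) :
    ∃ r ∈ pAdicRat p, a = ((r : ℚ_[p]), -(r : ℝ)) := by
  obtain ⟨x, t⟩ := a
  obtain ⟨r, hr, hxr⟩ := pAdicRat_rep x
  have key : ∀ s ∈ pAdicRat p, ∀ n, solF n (x - (s : ℚ_[p]), t + s) = 1 := by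
    intro s hs n
    have := solF_add n (x - (s : ℚ_[p]), t + s) ((s : ℚ_[p]), -(s : ℝ))
    rw [solF_iota n hs, mul_one] at this
    rw [← this, ← h n]
    congr 1
    ext <;> simp
  have h0 := key r hr 0
  simp only [solF, pow_zero, div_one] at h0
  rw [solChi_of_norm hxr, one_mul] at h0
  obtain ⟨m, hm⟩ := solE_eq_one h0
  have hm' : (m : ℚ) ∈ pAdicRat p := ⟨m, 0, by simp⟩
  have hs := (pAdicRat p).sub_mem hr hm'
  refine ⟨r - m, hs, ?_⟩
  have ht : t + ((r - m : ℚ) : ℝ) = 0 := by push_cast; linarith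
  have h2 := key _ hs
  rw [ht] at h2
  have h3 : ∀ n : ℕ, ‖x - ((r - m : ℚ) : ℚ_[p])‖ ≤ ((p : ℝ)⁻¹) ^ n := by
    intro n
    have h4 := h2 n
    have h0 : solE 0 = 1 := by simpa using solE_int 0
    simp only [solF, zero_div, h0, mul_one] at h4
    have h5 := solChi_eq_one h4
    have hp0 : (0 : ℝ) < p := by exact_mod_cast hp.out.pos
    rw [norm_div, Padic.norm_p_pow, zpow_neg, zpow_natCast, div_le_one (by positivity)] at h5
    simpa using h5
  have hp1 : (1 : ℝ) < p := by exact_mod_cast hp.out.one_lt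
  have h6 := ge_of_tendsto' (tendsto_pow_atTop_nhds_zero_of_lt_one (r := (p : ℝ)⁻¹)
    (by positivity) (inv_lt_one_of_one_lt₀ hp1)) h3
  have h7 := sub_eq_zero.1 (norm_le_zero_iff.1 h6)
  ext
  · exact h7
  · simp only; linarith

lemma solF_surj (z : solenoid p) :
    ∃ a ∈ Metric.closedBall (0 : ℚ_[p]) 1 ×ˢ Set.Icc (0 : ℝ) 1, ∀ n, solF n a = z.1 n := by
  have hC : IsCompact (Metric.closedBall (0 : ℚ_[p]) 1 ×ˢ Set.Icc (0 : ℝ) 1) :=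
    (isCompact_closedBall _ _).prod isCompact_Icc
  have hcl : ∀ n, IsClosed {a : ℚ_[p] × ℝ | solF n a = z.1 n} := fun n =>
    isClosed_eq (solF_continuous n) continuous_const
  have hne : (⋂ n, (Metric.closedBall (0 : ℚ_[p]) 1 ×ˢ Set.Icc (0 : ℝ) 1) ∩
      {a : ℚ_[p] × ℝ | solF n a = z.1 n}).Nonempty := by
    refine IsCompact.nonempty_iInter_of_sequence_nonempty_isCompact_isClosed
      (fun n => (Metric.closedBall (0 : ℚ_[p]) 1 ×ˢ Set.Icc (0 : ℝ) 1) ∩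
      {a : ℚ_[p] × ℝ | solF n a = z.1 n}) ?_ ?_ (hC.inter_right (hcl 0))
        (fun n => hC.isClosed.inter (hcl n))
    · rintro n a ⟨h1, h2⟩
      refine ⟨h1, ?_⟩
      simp only [Set.mem_setOf_eq] at h2 ⊢
      rw [← solF_pow, h2]
      exact z.2 n
    · intro n
      obtain ⟨s, hs⟩ := solE_surj (z.1 n)
      refine ⟨((⌊(p : ℝ) ^ n * s⌋ : ℚ_[p]), Int.fract ((p : ℝ) ^ n * s)), ⟨?_, ?_⟩, ?_⟩
      · simpa using Padic.norm_int_le_one (p := p) ⌊(p : ℝ) ^ n * s⌋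
      · exact ⟨Int.fract_nonneg _, (Int.fract_lt_one _).le⟩
      · have h := solChi_rat (pAdicRat_mk (p := p) ⌊(p : ℝ) ^ n * s⌋ n)
        push_cast at h
        simp only [Set.mem_setOf_eq, solF, h]
        rw [← solE_add, ← hs, ← add_div, Int.floor_add_fract]
        have h2 : (p : ℝ) ≠ 0 := by exact_mod_cast hp.out.ne_zero
        congr 1
        field_simp
  obtain ⟨a, ha⟩ := hne
  rw [Set.mem_iInter] at ha
  exact ⟨a, (ha 0).1, fun n => (ha n).2⟩

end

/-- For `p` prime, the map `ι : ℤ[1/p] → ℚ_p × ℝ`, `r ↦ (r, -r)`, is an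
injective group homomorphism, its image is a discrete subgroup of `ℚ_p × ℝ`, and the
quotient topological group `(ℚ_p × ℝ)/ι(ℤ[1/p])` is isomorphic as a topological group to
the `p`-solenoid `𝕊_p`; in particular the image of `ι` is cocompact. -/
theorem pAdicRat_lattice_quotient_solenoid (p : ℕ) [Fact p.Prime] :
    ∃ ι : pAdicRat p →+ ℚ_[p] × ℝ,
      (∀ r : pAdicRat p, ι r = (((r : ℚ) : ℚ_[p]), -((r : ℚ) : ℝ))) ∧
      Function.Injective ι ∧
      DiscreteTopology ι.range ∧
      (∃ e : ((ℚ_[p] × ℝ) ⧸ ι.range) ≃ solenoid p,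
        (∀ a b : (ℚ_[p] × ℝ) ⧸ ι.range, e (a + b) = e a * e b) ∧
        Continuous e ∧ Continuous e.symm) ∧
      CompactSpace ((ℚ_[p] × ℝ) ⧸ ι.range) := by
  let ι : pAdicRat p →+ ℚ_[p] × ℝ :=
    { toFun := fun r => (((r : ℚ) : ℚ_[p]), -((r : ℚ) : ℝ))
      map_zero' := by simp
      map_add' := fun a b => by ext <;> simp; ring }
  have hι : ∀ r : pAdicRat p, ι r = (((r : ℚ) : ℚ_[p]), -((r : ℚ) : ℝ)) := fun _ => rfl
  let Φ : ℚ_[p] × ℝ →+ Additive (solenoid p) :=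
    AddMonoidHom.mk' (fun a => Additive.ofMul ⟨fun n => solF n a, fun n => solF_pow n a⟩)
      (fun a b => by
        apply Additive.toMul.injective
        apply Subtype.ext
        funext n
        exact solF_add n a b)
  have hΦ : ∀ a n, (Additive.toMul (Φ a)).1 n = solF n a := fun _ _ => rfl
  have hker : ∀ a, Φ a = 0 ↔ a ∈ ι.range := by
    intro a
    constructor
    · intro h
      have : ∀ n, solF n a = 1 := by
        intro n
        rw [← hΦ, h]; rfl
      obtain ⟨r, hr, h'⟩ := solF_ker this
      exact ⟨⟨r, hr⟩, h'.symm⟩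
    · rintro ⟨r, rfl⟩
      apply Additive.toMul.injective
      apply Subtype.ext
      funext n
      exact solF_iota n r.2
  have hsurj : ∀ z : Additive (solenoid p),
      ∃ a ∈ Metric.closedBall (0 : ℚ_[p]) 1 ×ˢ Set.Icc (0 : ℝ) 1, Φ a = z := by
    intro z
    obtain ⟨a, ha, h⟩ := solF_surj (Additive.toMul z)
    refine ⟨a, ha, ?_⟩
    apply Additive.toMul.injective
    apply Subtype.ext
    funext n
    exact h n
  have hΦc : Continuous fun a => Additive.toMul (Φ a) :=
    Continuous.subtype_mk (continuous_pi fun n => solF_continuous n) _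
  have hcomp : CompactSpace ((ℚ_[p] × ℝ) ⧸ ι.range) := by
    have hC : IsCompact (Metric.closedBall (0 : ℚ_[p]) 1 ×ˢ Set.Icc (0 : ℝ) 1) :=
      (isCompact_closedBall _ _).prod isCompact_Icc
    have h := hC.image (f := (QuotientAddGroup.mk : _ → (ℚ_[p] × ℝ) ⧸ ι.range))
      continuous_quotient_mk'
    refine ⟨?_⟩
    convert h
    symm
    rw [Set.eq_univ_iff_forall]
    intro q
    obtain ⟨b, rfl⟩ := QuotientAddGroup.mk_surjective q
    obtain ⟨a, ha, h'⟩ := hsurj (Φ b)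
    refine ⟨a, ha, ?_⟩
    rw [QuotientAddGroup.eq, ← hker, map_add, map_neg, h', neg_add_cancel]
  let F : (ℚ_[p] × ℝ) ⧸ ι.range →+ Additive (solenoid p) :=
    QuotientAddGroup.lift ι.range Φ (fun a ha => (hker a).2 ha)
  have hF : ∀ a : ℚ_[p] × ℝ, F (a : (ℚ_[p] × ℝ) ⧸ ι.range) = Φ a := fun _ => rfl
  have hFb : Function.Bijective fun q => Additive.toMul (F q) := by
    constructor
    · refine Additive.toMul.injective.comp ((injective_iff_map_eq_zero F).2 ?_)
      intro q hq
      obtain ⟨b, rfl⟩ := QuotientAddGroup.mk_surjective q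
      rw [QuotientAddGroup.eq_zero_iff, ← hker]
      exact hq
    · intro z
      obtain ⟨a, -, h⟩ := hsurj (Additive.ofMul z)
      exact ⟨(a : (ℚ_[p] × ℝ) ⧸ ι.range), congrArg Additive.toMul h⟩
  have hFc : Continuous fun q => Additive.toMul (F q) := hΦc.quotient_lift _
  refine ⟨ι, hι, ?_, ?_, ⟨Equiv.ofBijective _ hFb, ?_, hFc, ?_⟩, hcomp⟩
  · intro a b hab
    have := congrArg Prod.fst hab
    simp only [hι] at this
    exact Subtype.ext (by exact_mod_cast this)
  · refine discreteTopology_iff_isOpen_singleton_zero.mpr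
      ⟨Metric.ball 0 1, Metric.isOpen_ball, ?_⟩
    ext ⟨a, r, rfl⟩
    simp only [Set.mem_preimage, Set.mem_singleton_iff]
    constructor
    · intro h
      rw [mem_ball_zero_iff, hι, Prod.norm_def, max_lt_iff] at h
      obtain ⟨z, hz⟩ := pAdicRat_int r.2 h.1.le
      have h2 := h.2
      simp only [hz] at h2
      rw [norm_neg, Real.norm_eq_abs, Rat.cast_intCast] at h2
      have hz0 : z = 0 := by
        rw [← Int.abs_lt_one_iff]
        exact_mod_cast h2
      have : r = 0 := Subtype.ext (by rw [hz, hz0]; simp)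
      subst this
      exact Subtype.ext (map_zero ι)
    · intro h
      have := congrArg Subtype.val h
      simp only at this
      rw [this]
      simp
  · intro a b
    exact congrArg Additive.toMul (map_add F a b)
  · exact (Continuous.homeoOfEquivCompactToT2 (f := Equiv.ofBijective _ hFb) hFc).symm.continuous
end

section
/- Let p be a prime number. The map (x,r) ↦ χ_{(x,r)}, where χ_{(x,r)}(q,t) = exp(2πi·{x·q}_p)·exp(2πi·r·t) for (q,t) ∈ ℚ_p × ℝ, is an isomorphism of topological groups from ℚ_p × ℝ onto the Pontryagin dual of ℚ_p × ℝ (the group of continuous homomorphisms ℚ_p × ℝ → 𝕋 with the compact-open topology); in particular, ℚ_p × ℝ is self-dual. -/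
open scoped Real

section aux
variable (p : ℕ) [Fact p.Prime]

lemma aux_int (r : ℚ) (hr : r ∈ pAdicRat p) (h : ‖(r : ℚ_[p])‖ ≤ 1) : ∃ n : ℤ, r = n := by
  obtain ⟨z, k, hz⟩ := hr
  have hp0 : (p : ℚ) ≠ 0 := by exact_mod_cast (Fact.out : p.Prime).ne_zero
  have hz' : (r : ℚ_[p]) * (p : ℚ_[p]) ^ k = (z : ℚ_[p]) := by exact_mod_cast congrArg (fun q : ℚ => (q : ℚ_[p])) hz
  have h1 : ‖(z : ℚ_[p])‖ ≤ (p : ℝ) ^ (-k : ℤ) := by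
    rw [← hz', norm_mul, Padic.norm_p_pow]
    exact mul_le_of_le_one_left (by positivity) h
  rw [Padic.norm_int_le_pow_iff_dvd] at h1
  obtain ⟨m, rfl⟩ := h1
  refine ⟨m, ?_⟩
  push_cast at hz
  have : (p : ℚ) ^ k ≠ 0 := pow_ne_zero _ hp0
  apply mul_right_cancel₀ this
  rw [hz, mul_comm]

variable (frac : ℚ_[p] → ℚ)
    (hfrac : ∀ x : ℚ_[p], frac x ∈ pAdicRat p ∧ 0 ≤ frac x ∧ frac x < 1 ∧
      ‖x - ((frac x : ℚ) : ℚ_[p])‖ ≤ 1)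

include hfrac in
lemma aux_add (x y : ℚ_[p]) : Circle.exp (2 * π * (frac (x + y) : ℝ)) =
    Circle.exp (2 * π * (frac x : ℝ)) * Circle.exp (2 * π * (frac y : ℝ)) := by
  obtain ⟨n, hn⟩ := aux_int p (frac (x + y) - frac x - frac y)
    (sub_mem (sub_mem (hfrac _).1 (hfrac _).1) (hfrac _).1) (by
      have e : ((frac (x + y) - frac x - frac y : ℚ) : ℚ_[p]) =
        (x - frac x) + (y - frac y) - ((x + y) - frac (x + y)) := by push_cast; ring
      rw [e]
      rw [sub_eq_add_neg (x - (frac x : ℚ_[p]) + (y - frac y))]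
      refine (Padic.nonarchimedean _ _).trans ?_
      rw [norm_neg]
      exact max_le ((Padic.nonarchimedean _ _).trans (max_le (hfrac _).2.2.2 (hfrac _).2.2.2))
        (hfrac _).2.2.2)
  rw [← Circle.exp_add, Circle.exp_eq_exp]
  refine ⟨n, ?_⟩
  have : (frac (x + y) : ℝ) - frac x - frac y = n := by exact_mod_cast congrArg (fun q : ℚ => (q : ℝ)) hn
  rw [← this]; ring

include hfrac in
lemma aux_one (x : ℚ_[p]) : Circle.exp (2 * π * (frac x : ℝ)) = 1 ↔ ‖x‖ ≤ 1 := by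
  obtain ⟨h1, h2, h3, h4⟩ := hfrac x
  constructor
  · intro h
    obtain ⟨n, hn⟩ := Circle.exp_eq_one.1 h
    have e : (frac x : ℝ) = n := by
      have := Real.pi_pos
      apply mul_left_cancel₀ (show (2 * π) ≠ 0 by positivity)
      rw [hn, mul_comm]
    have e : frac x = n := by exact_mod_cast e
    rw [e] at h2 h3
    have : n = 0 := by
      have : 0 ≤ n := by exact_mod_cast h2
      have : n < 1 := by exact_mod_cast h3
      omega
    simpa [e, this] using h4
  · intro h
    obtain ⟨n, hn⟩ := aux_int p _ h1 (by
      have e : (frac x : ℚ_[p]) = x + -(x - frac x) := by ring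
      rw [e]
      exact (Padic.nonarchimedean _ _).trans (max_le h (by rwa [norm_neg])))
    rw [hn]
    simpa using Circle.exp_two_pi_mul_int n

/-- the standard character -/
noncomputable def auxPsi : Multiplicative ℚ_[p] →* Circle :=
  MonoidHom.mk' (fun x => Circle.exp (2 * π * (frac x.toAdd : ℝ)))
    (fun x y => aux_add p frac hfrac x.toAdd y.toAdd)

lemma auxPsi_one (x : ℚ_[p]) : auxPsi p frac hfrac (.ofAdd x) = 1 ↔ ‖x‖ ≤ 1 :=
  aux_one p frac hfrac x

lemma auxPsi_cont : Continuous (auxPsi p frac hfrac) := by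
  apply continuous_of_continuousAt_one
  have : (auxPsi p frac hfrac) =ᶠ[nhds 1] fun _ => 1 := by
    have h : Metric.closedBall (0 : ℚ_[p]) 1 ∈ nhds (0 : ℚ_[p]) :=
      Metric.closedBall_mem_nhds _ one_pos
    filter_upwards [(h : Multiplicative.toAdd ⁻¹' (Metric.closedBall (0 : ℚ_[p]) 1) ∈ nhds (1 : Multiplicative ℚ_[p]))] with x hx
    exact (auxPsi_one p frac hfrac x.toAdd).2 (mem_closedBall_zero_iff.1 hx)
  exact continuousAt_const.congr this.symm

lemma aux_real (χ : Multiplicative ℝ →* Circle) (hχ : Continuous χ) :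
    ∃ r : ℝ, ∀ t : ℝ, χ (.ofAdd t) = Circle.exp (2 * π * (r * t)) := by
  obtain ⟨θ, ⟨h0, hθ⟩, -⟩ := Circle.isCoveringMap_exp.existsUnique_continuousMap_lifts
    (⟨fun t : ℝ => χ (.ofAdd t), hχ.comp continuous_ofAdd⟩ : C(ℝ, Circle)) 0 0 (by
      simp)
  have hθ' : ∀ t, Circle.exp (θ t) = χ (.ofAdd t) := fun t => congrFun hθ t
  have hadd : ∀ s t, θ (s + t) = θ s + θ t := by
    intro s t
    refine congrFun (Circle.isCoveringMap_exp.eq_of_comp_eq (g₁ := fun t => θ (s + t))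
      (g₂ := fun t => θ s + θ t) (by fun_prop) (by fun_prop) ?_ 0 (by simp [h0])) t
    ext1 t
    simp only [Function.comp, hθ', Circle.exp_add, ofAdd_add, map_mul]
  let f : ℝ →+ ℝ := AddMonoidHom.mk' θ hadd
  have hlin : ∀ t, θ t = t * θ 1 := by
    intro t
    have := map_real_smul f θ.continuous t 1
    simpa [f] using this
  refine ⟨θ 1 / (2 * π), fun t => ?_⟩
  rw [← hθ', hlin]
  congr 1
  have := Real.pi_pos
  field_simp

lemma aux_small (χ : Multiplicative ℚ_[p] →* Circle) (hχ : Continuous χ) :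
    ∃ n : ℕ, ∀ x : ℚ_[p], ‖x‖ ≤ 1 → χ (.ofAdd ((p : ℚ_[p]) ^ n * x)) = 1 := by
  have hV : Circle.centeredArc (π / 2) ∈ nhds (1 : Circle) :=
    (Circle.isOpen_centeredArc _).mem_nhds (by
      rw [Circle.mem_centeredArc (by linarith [Real.pi_pos])]; simp [Real.pi_pos])
  have h1 : (fun x : ℚ_[p] => χ (.ofAdd x)) ⁻¹' (Circle.centeredArc (π / 2)) ∈ nhds (0 : ℚ_[p]) := by
    apply (hχ.comp continuous_ofAdd).continuousAt
    simpa using hV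
  obtain ⟨ε, hε, hb⟩ := Metric.mem_nhds_iff.1 h1
  obtain ⟨n, hn⟩ := PadicInt.exists_pow_neg_lt p hε
  refine ⟨n, fun x hx => ?_⟩
  refine Circle.eq_one_of_forall_pow_mem_centeredArc_pi_div_two fun m hm => ?_
  rw [← map_pow, ← ofAdd_nsmul]
  refine hb ?_
  rw [mem_ball_zero_iff, nsmul_eq_mul, norm_mul, norm_mul, Padic.norm_p_pow]
  refine lt_of_le_of_lt ?_ hn
  have : ‖(m : ℚ_[p])‖ ≤ 1 := by exact_mod_cast Padic.norm_int_le_one (p := p) (m : ℤ)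
  calc _ ≤ 1 * ((p : ℝ) ^ (-n : ℤ) * 1) := by gcongr
    _ = _ := by ring

lemma aux_padic0 (χ : Multiplicative ℚ_[p] →* Circle)
    (hχ : ∀ x : ℚ_[p], ‖x‖ ≤ 1 → χ (.ofAdd x) = 1) :
    ∃ a : ℚ_[p], ∀ q : ℚ_[p], χ (.ofAdd q) = auxPsi p frac hfrac (.ofAdd (a * q)) := by
  have hp0 : (p : ℚ_[p]) ≠ 0 := by exact_mod_cast (Fact.out : p.Prime).ne_zero
  have hpR : (p : ℝ) ≠ 0 := by exact_mod_cast (Fact.out : p.Prime).ne_zero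
  let ψ := auxPsi p frac hfrac
  let S : ℕ → Set ℤ_[p] := fun k =>
    {a | ψ (.ofAdd ((a : ℚ_[p]) * ((p : ℚ_[p]) ^ k)⁻¹)) = χ (.ofAdd ((p : ℚ_[p]) ^ k)⁻¹)}
  have hcl : ∀ k, IsClosed (S k) := by
    intro k
    refine isClosed_eq ?_ continuous_const
    refine (auxPsi_cont p frac hfrac).comp (continuous_ofAdd.comp ?_)
    exact (continuous_subtype_val).mul continuous_const
  have hmono : ∀ k, S (k + 1) ⊆ S k := by
    intro k a (ha : _ = _)
    change _ = _
    have e : ((p : ℚ_[p]) ^ k)⁻¹ = p • ((p : ℚ_[p]) ^ (k + 1))⁻¹ := by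
      rw [nsmul_eq_mul, pow_succ]; field_simp
    rw [e, mul_smul_comm, ofAdd_nsmul, ofAdd_nsmul, map_pow, map_pow, ha]
  have hne : ∀ k, (S k).Nonempty := by
    intro k
    have hpk : (p : ℝ) ^ k ≠ 0 := pow_ne_zero _ hpR
    have h1 : (χ (.ofAdd ((p : ℚ_[p]) ^ k)⁻¹)) ^ (p ^ k) = 1 := by
      rw [← map_pow, ← ofAdd_nsmul, nsmul_eq_mul]
      push_cast
      rw [mul_inv_cancel₀ (pow_ne_zero _ hp0)]
      exact hχ 1 (by simp)
    obtain ⟨θ, hθ⟩ : ∃ θ : ℝ, Circle.exp θ = χ (.ofAdd ((p : ℚ_[p]) ^ k)⁻¹) :=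
      ⟨_, Circle.exp_arg _⟩
    have hψ : (ψ (.ofAdd ((p : ℚ_[p]) ^ k)⁻¹)) = Circle.exp (2 * π * (1 / (p : ℝ) ^ k)) := by
      obtain ⟨m1, m2, m3, m4⟩ := hfrac (((p : ℚ_[p]) ^ k)⁻¹)
      obtain ⟨n, hn⟩ := aux_int p (frac (((p : ℚ_[p]) ^ k)⁻¹) - ((p : ℚ) ^ k)⁻¹)
        (sub_mem m1 ⟨1, k, by
          have : (p : ℚ) ≠ 0 := by exact_mod_cast (Fact.out : p.Prime).ne_zero
          field_simp; simp⟩) (by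
          rw [norm_sub_rev] at m4
          push_cast
          exact m4)
      change Circle.exp _ = _
      rw [Circle.exp_eq_exp]
      refine ⟨n, ?_⟩
      have : (frac (((p : ℚ_[p]) ^ k)⁻¹) : ℝ) - ((p : ℝ) ^ k)⁻¹ = n := by
        have h := congrArg (fun q : ℚ => (q : ℝ)) hn
        push_cast at h
        exact h
      simp only [toAdd_ofAdd]
      rw [← this]; ring
    rw [← hθ, ← Circle.exp_nsmul, Circle.exp_eq_one] at h1
    obtain ⟨m, hm⟩ := h1
    refine ⟨(m : ℤ_[p]), ?_⟩
    change _ = _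
    rw [PadicInt.coe_intCast, ← zsmul_eq_mul, ofAdd_zsmul, map_zpow, hψ, ← Circle.exp_zsmul, ← hθ]
    congr 1
    rw [nsmul_eq_mul] at hm
    push_cast at hm
    rw [zsmul_eq_mul]
    field_simp
    linear_combination -hm
  obtain ⟨a, ha⟩ := IsCompact.nonempty_iInter_of_sequence_nonempty_isCompact_isClosed S hmono hne
    (hcl 0).isCompact hcl
  rw [Set.mem_iInter] at ha
  refine ⟨a, fun q => ?_⟩
  obtain ⟨⟨z, k, hz⟩, m2, m3, m4⟩ := hfrac q
  have hz' : (frac q : ℚ_[p]) * (p : ℚ_[p]) ^ k = (z : ℚ_[p]) := by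
    exact_mod_cast congrArg (fun q : ℚ => (q : ℚ_[p])) hz
  have e : q = (q - frac q) + z • ((p : ℚ_[p]) ^ k)⁻¹ := by
    rw [zsmul_eq_mul, ← hz']
    have := pow_ne_zero k hp0
    field_simp
    ring
  generalize q - (frac q : ℚ_[p]) = y at e m4
  rw [e, mul_add, ofAdd_add, ofAdd_add, map_mul, map_mul, hχ _ m4,
    (auxPsi_one p frac hfrac _).2, mul_smul_comm, ofAdd_zsmul, ofAdd_zsmul, map_zpow, map_zpow]
  · congr 2
    exact (ha k).symm
  · rw [norm_mul]
    exact mul_le_one₀ a.norm_le_one (norm_nonneg _) m4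

lemma aux_padic (χ : Multiplicative ℚ_[p] →* Circle) (hc : Continuous χ) :
    ∃ a : ℚ_[p], ∀ q : ℚ_[p], χ (.ofAdd q) = auxPsi p frac hfrac (.ofAdd (a * q)) := by
  have hp0 : (p : ℚ_[p]) ≠ 0 := by exact_mod_cast (Fact.out : p.Prime).ne_zero
  obtain ⟨n, hn⟩ := aux_small p χ hc
  obtain ⟨a, ha⟩ := aux_padic0 p frac hfrac
    (χ.comp (AddMonoidHom.toMultiplicative (AddMonoidHom.mulLeft ((p : ℚ_[p]) ^ n)))) hn
  refine ⟨a * ((p : ℚ_[p]) ^ n)⁻¹, fun q => ?_⟩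
  have := ha (((p : ℚ_[p]) ^ n)⁻¹ * q)
  have e : (p : ℚ_[p]) ^ n * (((p : ℚ_[p]) ^ n)⁻¹ * q) = q := by field_simp
  simp only [MonoidHom.comp_apply, AddMonoidHom.toMultiplicative_apply_apply, toAdd_ofAdd, AddMonoidHom.coe_mulLeft, e] at this
  rw [this, mul_assoc]

/-- the character attached to a pair -/
noncomputable def auxChar (a : ℚ_[p] × ℝ) :
    ContinuousMonoidHom (Multiplicative (ℚ_[p] × ℝ)) Circle where
  toFun b := auxPsi p frac hfrac (.ofAdd (a.1 * b.toAdd.1)) * Circle.exp (2 * π * (a.2 * b.toAdd.2))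
  map_one' := by simp
  map_mul' b c := by
    simp only [toAdd_mul, Prod.fst_add, Prod.snd_add, mul_add, ofAdd_add, map_mul, Circle.exp_add]
    exact mul_mul_mul_comm _ _ _ _
  continuous_toFun := by
    have := auxPsi_cont p frac hfrac
    have h1 : Continuous (fun b : Multiplicative (ℚ_[p] × ℝ) => b.toAdd) := continuous_toAdd
    exact (this.comp (continuous_ofAdd.comp (by fun_prop))).mul (Circle.exp.continuous.comp (by fun_prop))

/-- as a homomorphism -/
noncomputable def auxHom : Multiplicative (ℚ_[p] × ℝ) →*
    ContinuousMonoidHom (Multiplicative (ℚ_[p] × ℝ)) Circle :=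
  MonoidHom.mk' (fun a => auxChar p frac hfrac a.toAdd) (by
    intro a b
    ext1 c
    change auxPsi p frac hfrac (.ofAdd ((a.toAdd.1 + b.toAdd.1) * c.toAdd.1)) *
        Circle.exp (2 * π * ((a.toAdd.2 + b.toAdd.2) * c.toAdd.2)) =
      (auxPsi p frac hfrac (.ofAdd (a.toAdd.1 * c.toAdd.1)) * Circle.exp (2 * π * (a.toAdd.2 * c.toAdd.2))) *
      (auxPsi p frac hfrac (.ofAdd (b.toAdd.1 * c.toAdd.1)) * Circle.exp (2 * π * (b.toAdd.2 * c.toAdd.2)))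
    simp only [add_mul, mul_add, ofAdd_add, map_mul, Circle.exp_add]
    exact mul_mul_mul_comm _ _ _ _)

lemma auxHom_apply (a b : ℚ_[p] × ℝ) : auxHom p frac hfrac (.ofAdd a) (.ofAdd b) =
    auxPsi p frac hfrac (.ofAdd (a.1 * b.1)) * Circle.exp (2 * π * (a.2 * b.2)) := rfl

lemma auxHom_cont : Continuous (auxHom p frac hfrac) := by
  apply ContinuousMonoidHom.continuous_of_continuous_uncurry
  have := auxPsi_cont p frac hfrac
  have h1 : Continuous (fun b : Multiplicative (ℚ_[p] × ℝ) => b.toAdd) := continuous_toAdd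
  change Continuous (fun b : Multiplicative (ℚ_[p] × ℝ) × Multiplicative (ℚ_[p] × ℝ) =>
    auxPsi p frac hfrac (.ofAdd (b.1.toAdd.1 * b.2.toAdd.1)) *
      Circle.exp (2 * π * (b.1.toAdd.2 * b.2.toAdd.2)))
  exact (this.comp (continuous_ofAdd.comp (by fun_prop))).mul (Circle.exp.continuous.comp (by fun_prop))

lemma auxHom_inj : Function.Injective (auxHom p frac hfrac) := by
  refine (injective_iff_map_eq_one _).2 fun a ha => ?_
  have h : ∀ b : ℚ_[p] × ℝ, auxPsi p frac hfrac (.ofAdd (a.toAdd.1 * b.1)) *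
      Circle.exp (2 * π * (a.toAdd.2 * b.2)) = 1 := by
    intro b
    rw [← auxHom_apply, ofAdd_toAdd, ha]
    rfl
  have h1 : a.toAdd.1 = 0 := by
    by_contra hne
    have := h ((a.toAdd.1)⁻¹ * (p : ℚ_[p])⁻¹, 0)
    rw [← mul_assoc, mul_inv_cancel₀ hne] at this
    simp only [mul_zero, Circle.exp_zero, mul_one, one_mul] at this
    rw [auxPsi_one, norm_inv, Padic.norm_p, inv_inv] at this
    have h2 : (1 : ℝ) < p := by exact_mod_cast (Fact.out : p.Prime).one_lt
    linarith
  have h2 : a.toAdd.2 = 0 := by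
    by_contra hne
    have := h (0, (a.toAdd.2)⁻¹ * (1 / 2))
    simp only [mul_inv_cancel_left₀ hne, mul_zero, ofAdd_zero, map_one, one_mul] at this
    obtain ⟨n, hn⟩ := Circle.exp_eq_one.1 this
    have h3 : (1 : ℝ) = 2 * n := by
      have := Real.pi_pos
      apply mul_left_cancel₀ this.ne'
      linarith
    have h4 : (1 : ℤ) = 2 * n := by exact_mod_cast h3
    omega
  exact Multiplicative.toAdd.injective (Prod.ext h1 h2)

lemma auxHom_surj : Function.Surjective (auxHom p frac hfrac) := by
  intro χ
  obtain ⟨a, ha⟩ := aux_padic p frac hfrac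
    (χ.toMonoidHom.comp (AddMonoidHom.toMultiplicative (AddMonoidHom.inl ℚ_[p] ℝ)))
    (χ.continuous_toFun.comp (continuous_ofAdd.comp
      ((by fun_prop : Continuous fun x : ℚ_[p] => (x, (0 : ℝ))).comp continuous_toAdd)))
  obtain ⟨r, hr⟩ := aux_real
    (χ.toMonoidHom.comp (AddMonoidHom.toMultiplicative (AddMonoidHom.inr ℚ_[p] ℝ)))
    (χ.continuous_toFun.comp (continuous_ofAdd.comp
      ((by fun_prop : Continuous fun x : ℝ => ((0 : ℚ_[p]), x)).comp continuous_toAdd)))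
  refine ⟨.ofAdd (a, r), ?_⟩
  ext1 b
  obtain ⟨q, t⟩ := b
  have e := auxHom_apply p frac hfrac (a, r) (q, t)
  refine e.trans ?_
  rw [← ha, ← hr]
  change χ (.ofAdd (q, 0)) * χ (.ofAdd (0, t)) = χ (.ofAdd (q, t))
  rw [← map_mul, ← ofAdd_add]
  simp

lemma auxHom_open : IsOpenMap (auxHom p frac hfrac) := by
  have : SigmaCompactSpace (Multiplicative (ℚ_[p] × ℝ)) :=
    inferInstanceAs (SigmaCompactSpace (ℚ_[p] × ℝ))
  have : LocallyCompactSpace (Multiplicative (ℚ_[p] × ℝ)) :=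
    inferInstanceAs (LocallyCompactSpace (ℚ_[p] × ℝ))
  have : LocallyCompactSpace (ContinuousMonoidHom (Multiplicative (ℚ_[p] × ℝ)) Circle) :=
    inferInstanceAs (LocallyCompactSpace (PontryaginDual (Multiplicative (ℚ_[p] × ℝ))))
  exact MonoidHom.isOpenMap_of_sigmaCompact _ (auxHom_surj p frac hfrac) (auxHom_cont p frac hfrac)

end aux

/-- For `p` prime, with `{·}_p : ℚ_p → ℤ[1/p]` the `p`-adic fractional part,
the map `(x,r) ↦ χ_{(x,r)}`, where `χ_{(x,r)}(q,t) = exp(2πi {xq}_p) exp(2πi rt)`, is an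
isomorphism of topological groups from `ℚ_p × ℝ` onto its Pontryagin dual (the group of
continuous homomorphisms `ℚ_p × ℝ → 𝕋` with the compact-open topology); in particular
`ℚ_p × ℝ` is self-dual. -/
theorem padic_real_self_dual (p : ℕ) [Fact p.Prime]
    (frac : ℚ_[p] → ℚ)
    (hfrac : ∀ x : ℚ_[p], frac x ∈ pAdicRat p ∧ 0 ≤ frac x ∧ frac x < 1 ∧
      ‖x - ((frac x : ℚ) : ℚ_[p])‖ ≤ 1) :
    ∃ Φ : (ℚ_[p] × ℝ) ≃ ContinuousMonoidHom (Multiplicative (ℚ_[p] × ℝ)) Circle,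
      (∀ (x q : ℚ_[p]) (r t : ℝ),
        Φ (x, r) (Multiplicative.ofAdd ((q, t) : ℚ_[p] × ℝ)) =
          Circle.exp (2 * π * ((frac (x * q) : ℝ))) * Circle.exp (2 * π * (r * t))) ∧
      (∀ a b : ℚ_[p] × ℝ, Φ (a + b) = Φ a * Φ b) ∧
      Continuous Φ ∧ Continuous Φ.symm := by

  let e := Equiv.ofBijective (auxHom p frac hfrac)
    ⟨auxHom_inj p frac hfrac, auxHom_surj p frac hfrac⟩
  refine ⟨Multiplicative.ofAdd.trans e, ?_, ?_, ?_, ?_⟩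
  · intro x q r t
    exact auxHom_apply p frac hfrac (x, r) (q, t)
  · intro a b
    have h := map_mul (auxHom p frac hfrac) (.ofAdd a) (.ofAdd b)
    rw [← ofAdd_add] at h
    simp only [Equiv.trans_apply, e, Equiv.ofBijective_apply]
    exact h
  · exact (auxHom_cont p frac hfrac).comp continuous_ofAdd
  · refine continuous_toAdd.comp ?_
    exact (e.toHomeomorphOfContinuousOpen (auxHom_cont p frac hfrac)
      (auxHom_open p frac hfrac)).symm.continuous
end

section
/- Let p be a prime number, x ∈ ℚ_p with x ≠ 0, and θ ∈ ℝ with θ ≠ 0. Let D_{x,θ} = ι_{x,θ}(ℤ[1/p] × ℤ[1/p]). Then D_{x,θ}^⊥ = { ((t1, −t1), (x^{-1}·t2, −t2/θ)) : t1, t2 ∈ ℤ[1/p] }. -/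
open scoped Real

/-- The Heisenberg multiplier `η` on `(ℚ_p × ℝ)² × (ℚ_p × ℝ)²`, defined via the `p`-adic
fractional part `frac`. -/
noncomputable def heisenbergMult (p : ℕ) [Fact p.Prime] (frac : ℚ_[p] → ℚ)
    (m n : (ℚ_[p] × ℝ) × (ℚ_[p] × ℝ)) : Circle :=
  Circle.exp (2 * π * (m.1.2 * n.2.2)) * Circle.exp (2 * π * ((frac (m.1.1 * n.2.1) : ℝ)))

/-- The symmetrized version `ρ` of the Heisenberg multiplier. -/
noncomputable def heisenbergRho (p : ℕ) [Fact p.Prime] (frac : ℚ_[p] → ℚ)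
    (m n : (ℚ_[p] × ℝ) × (ℚ_[p] × ℝ)) : Circle :=
  heisenbergMult p frac m n * (heisenbergMult p frac n m)⁻¹

/-- The embedding `ι_{x,θ} : ℤ[1/p]² → (ℚ_p × ℝ)²`, `(r1, r2) ↦ ((x r1, θ r1), (r2, r2))`. -/
noncomputable def iotaEmb (p : ℕ) [Fact p.Prime] (x : ℚ_[p]) (θ : ℝ)
    (r : pAdicRat p × pAdicRat p) : (ℚ_[p] × ℝ) × (ℚ_[p] × ℝ) :=
  ((x * ((r.1 : ℚ) : ℚ_[p]), θ * ((r.1 : ℚ) : ℝ)), (((r.2 : ℚ) : ℚ_[p]), ((r.2 : ℚ) : ℝ)))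

theorem aux_mul {p : ℕ} {a b : ℚ} (ha : a ∈ pAdicRat p) (hb : b ∈ pAdicRat p) :
    a * b ∈ pAdicRat p := by
  obtain ⟨z1, k1, h1⟩ := ha
  obtain ⟨z2, k2, h2⟩ := hb
  refine ⟨z1 * z2, k1 + k2, ?_⟩
  push_cast
  rw [← h1, ← h2, pow_add]; ring

theorem aux_int_mem {p : ℕ} (m : ℤ) : (m : ℚ) ∈ pAdicRat p := ⟨m, 0, by simp⟩

theorem aux_int_s17 {p : ℕ} [Fact p.Prime] {q : ℚ} (hq : q ∈ pAdicRat p)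
    (hn : ‖(q : ℚ_[p])‖ ≤ 1) : ∃ m : ℤ, q = m := by
  obtain ⟨z, k, h⟩ := hq
  have hp : (p : ℚ) ≠ 0 := by exact_mod_cast (Fact.out : p.Prime).ne_zero
  have h' : (q : ℚ_[p]) * (p : ℚ_[p]) ^ k = (z : ℚ_[p]) := by exact_mod_cast congrArg (Rat.cast : ℚ → ℚ_[p]) h
  have hz : ‖(z : ℚ_[p])‖ ≤ (p : ℝ) ^ (-(k : ℤ)) := by
    rw [← h', norm_mul, Padic.norm_p_pow]
    exact mul_le_of_le_one_left (by positivity) hn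
  rw [Padic.norm_int_le_pow_iff_dvd] at hz
  obtain ⟨m, hm⟩ := hz
  refine ⟨m, ?_⟩
  have hpk : (p : ℚ) ^ k ≠ 0 := pow_ne_zero _ hp
  apply mul_right_cancel₀ hpk
  rw [h, hm]; push_cast; ring

theorem aux_exp (y : ℝ) : Circle.exp (2 * π * y) = 1 ↔ ∃ m : ℤ, y = m := by
  rw [Circle.exp_eq_one]
  have : (2 * π) ≠ 0 := by positivity
  constructor
  · rintro ⟨m, hm⟩
    exact ⟨m, mul_left_cancel₀ this (by rw [hm]; ring)⟩
  · rintro ⟨m, hm⟩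
    exact ⟨m, by rw [hm]; ring⟩

theorem aux_key (p : ℕ) [Fact p.Prime]
    (frac : ℚ_[p] → ℚ)
    (hfrac : ∀ y : ℚ_[p], frac y ∈ pAdicRat p ∧ 0 ≤ frac y ∧ frac y < 1 ∧
      ‖y - ((frac y : ℚ) : ℚ_[p])‖ ≤ 1) (a : ℚ_[p]) (s : ℝ) :
    (∀ r ∈ pAdicRat p, ∃ m : ℤ, s * (r : ℝ) + (frac (a * (r : ℚ_[p])) : ℝ) = m) ↔
      ∃ t : pAdicRat p, a = ((t : ℚ) : ℚ_[p]) ∧ s = -((t : ℚ) : ℝ) := by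
  constructor
  · intro H
    obtain ⟨m, hm⟩ := H 1 (by simpa using aux_int_mem (p := p) 1)
    simp only [Rat.cast_one, mul_one] at hm
    refine ⟨⟨frac a - m, sub_mem (hfrac a).1 (aux_int_mem m)⟩, ?_, ?_⟩
    swap
    · push_cast; linarith
    simp only
    set t : ℚ := frac a - m with ht
    have hs : s = -(t : ℝ) := by rw [ht]; push_cast; linarith
    have hp1 : 1 < (p : ℝ) := by exact_mod_cast (Fact.out : p.Prime).one_lt
    have hp0 : (p : ℚ) ≠ 0 := by exact_mod_cast (Fact.out : p.Prime).ne_zero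
    have bound : ∀ k : ℕ, ‖a - (t : ℚ_[p])‖ ≤ ((p : ℝ)⁻¹) ^ k := by
      intro k
      set r : ℚ := ((p : ℚ) ^ k)⁻¹ with hr
      have hrm : r ∈ pAdicRat p := ⟨1, k, by rw [hr]; field_simp; simp⟩
      obtain ⟨n, hn⟩ := H r hrm
      have hn' : -t * r + frac (a * (r : ℚ_[p])) = n := by
        rw [hs] at hn; exact_mod_cast hn
      have h2 : ((frac (a * (r : ℚ_[p])) : ℚ) : ℚ_[p]) = (n : ℚ_[p]) + t * r := by
        have : frac (a * (r : ℚ_[p])) = n + t * r := by linarith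
        rw [this]; push_cast; rfl
      have h3 := (hfrac (a * (r : ℚ_[p]))).2.2.2
      rw [h2] at h3
      have h4 : ‖(a - (t : ℚ_[p])) * (r : ℚ_[p])‖ ≤ 1 := by
        have e : (a - (t : ℚ_[p])) * (r : ℚ_[p]) =
          (a * r - ((n : ℚ_[p]) + t * r)) + (n : ℚ_[p]) := by ring
        rw [e]
        exact (Padic.nonarchimedean _ _).trans (max_le h3 (Padic.norm_int_le_one n))
      have h5 : ‖(r : ℚ_[p])‖ = (p : ℝ) ^ k := by
        rw [hr]; push_cast; rw [norm_inv, norm_pow, Padic.norm_p]; simp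
      rw [norm_mul, h5] at h4
      rw [inv_pow, ← one_div, le_div_iff₀ (by positivity)]
      exact h4
    have hl := tendsto_pow_atTop_nhds_zero_of_lt_one (r := (p : ℝ)⁻¹) (by positivity)
      (inv_lt_one_of_one_lt₀ hp1)
    have := ge_of_tendsto' hl bound
    exact sub_eq_zero.1 (norm_le_zero_iff.1 this)
  · rintro ⟨⟨t, ht⟩, rfl, rfl⟩ r hr
    simp only
    have h := hfrac ((t : ℚ_[p]) * (r : ℚ_[p]))
    obtain ⟨m, hm⟩ := aux_int_s17 (p := p) (q := t * r - frac ((t : ℚ_[p]) * (r : ℚ_[p])))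
      (sub_mem (aux_mul ht hr) h.1) (by push_cast; exact h.2.2.2)
    refine ⟨-m, ?_⟩
    have hm' : (t : ℝ) * r - (frac ((t : ℚ_[p]) * (r : ℚ_[p])) : ℝ) = m := by exact_mod_cast hm
    push_cast
    linarith

/-- For `p` prime, `x ∈ ℚ_p \ {0}` and `θ ∈ ℝ \ {0}`, with
`D_{x,θ} = ι_{x,θ}(ℤ[1/p]²)`, the annihilator of `D_{x,θ}` with respect to the
symmetrized Heisenberg multiplier `ρ` is
`D_{x,θ}^⊥ = {((t1, -t1), (x⁻¹ t2, -t2/θ)) : t1, t2 ∈ ℤ[1/p]}`. -/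
theorem dPerp_computation (p : ℕ) [Fact p.Prime]
    (frac : ℚ_[p] → ℚ)
    (hfrac : ∀ y : ℚ_[p], frac y ∈ pAdicRat p ∧ 0 ≤ frac y ∧ frac y < 1 ∧
      ‖y - ((frac y : ℚ) : ℚ_[p])‖ ≤ 1)
    (x : ℚ_[p]) (hx : x ≠ 0) (θ : ℝ) (hθ : θ ≠ 0) :
    {n : (ℚ_[p] × ℝ) × (ℚ_[p] × ℝ) |
        ∀ d ∈ Set.range (iotaEmb p x θ), heisenbergRho p frac d n = 1} =
      {n : (ℚ_[p] × ℝ) × (ℚ_[p] × ℝ) | ∃ t1 t2 : pAdicRat p,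
        n = (((((t1 : ℚ) : ℚ_[p])), -((t1 : ℚ) : ℝ)),
             (x⁻¹ * (((t2 : ℚ) : ℚ_[p])), -(((t2 : ℚ) : ℝ) / θ))) } := by
  ext ⟨⟨a, s⟩, ⟨b, u⟩⟩
  have hrho : ∀ r : pAdicRat p × pAdicRat p,
      heisenbergRho p frac (iotaEmb p x θ r) ((a, s), (b, u)) =
      Circle.exp (2 * π * ((θ * u) * ((r.1 : ℚ) : ℝ) + (frac (x * b * ((r.1 : ℚ) : ℚ_[p])) : ℝ))) *
      (Circle.exp (2 * π * (s * ((r.2 : ℚ) : ℝ) + (frac (a * ((r.2 : ℚ) : ℚ_[p])) : ℝ))))⁻¹ := by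
    intro r
    simp only [heisenbergRho, heisenbergMult, iotaEmb]
    rw [mul_right_comm x, mul_right_comm θ, mul_add, mul_add, Circle.exp_add, Circle.exp_add]
  have h0 : ∀ c : ℚ_[p], ∀ v : ℝ, Circle.exp (2 * π * (v * ((0 : ℚ) : ℝ) +
      (frac (c * ((0 : ℚ) : ℚ_[p])) : ℝ))) = 1 := by
    intro c v
    rw [aux_exp]
    have h := hfrac 0
    obtain ⟨m, hm⟩ := aux_int_s17 (p := p) h.1 (by simpa using h.2.2.2)
    refine ⟨m, ?_⟩
    simp [hm]
  have k1 := aux_key p frac hfrac a s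
  have k2 := aux_key p frac hfrac (x * b) (θ * u)
  simp only [Set.mem_setOf_eq, Set.forall_mem_range, hrho]
  trans (∃ t : pAdicRat p, a = ((t : ℚ) : ℚ_[p]) ∧ s = -((t : ℚ) : ℝ)) ∧
    (∃ t : pAdicRat p, x * b = ((t : ℚ) : ℚ_[p]) ∧ θ * u = -((t : ℚ) : ℝ))
  · rw [← k1, ← k2]
    simp only [← aux_exp]
    constructor
    · intro H
      constructor
      · intro r hr
        have := H (0, ⟨r, hr⟩)
        simp only [ZeroMemClass.coe_zero, h0, one_mul, inv_eq_one] at this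
        exact this
      · intro r hr
        have := H (⟨r, hr⟩, 0)
        simp only [ZeroMemClass.coe_zero, h0, inv_one, mul_one] at this
        exact this
    · rintro ⟨H1, H2⟩ r
      rw [H1 _ r.2.2, H2 _ r.1.2]; simp
  · constructor
    · rintro ⟨⟨t1, h1, h2⟩, t2, h3, h4⟩
      refine ⟨t1, t2, ?_⟩
      rw [← h1, ← h2, ← h3, ← neg_div, ← h4, inv_mul_cancel_left₀ hx, mul_div_cancel_left₀ _ hθ]
    · rintro ⟨t1, t2, h⟩
      simp only [Prod.mk.injEq] at h
      obtain ⟨⟨h1, h2⟩, h3, h4⟩ := h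
      refine ⟨⟨t1, h1, h2⟩, t2, ?_, ?_⟩
      · rw [h3, mul_inv_cancel_left₀ hx]
      · rw [h4]; field_simp
end
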